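/- arXiv:2201.03015 — 4 statements merged into one kernel-verified Lean document; each statement's English description precedes it below -/
import Mathlib

section
/- Suppose gcd(v, p) does not divide n. Then b_{v,r,a,m}(n) = Σ_{j=1}^{∞} (−1)^{j+1} [ b_{v,r,a,m}(n − (pr + a)j(3j − 1)/2) + b_{v,r,a,m}(n − (pr + a)j(3j + 1)/2) ], where b_{v,r,a,m}(x) is defined to be 0 for negative integers x and b_{v,r,a,m}(0) = 1 (the sum has only finitely many nonzero terms). Equivalently, Σ_{j ∈ ℤ} (−1)^{j} b_{v,r,a,m}(n − (pr + a)j(3j + 1)/2) = 0. -/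
/-- `b p a r m v n` is the number of partitions of `n` such that for every part, its
multiplicity is congruent to `j·a (mod p)` for some `0 ≤ j ≤ v - 1` and satisfies
`j(pr + a) ≤ multiplicity ≤ j(pr + a) + p(m - 1)`. -/
noncomputable def b (p a r m v n : ℕ) : ℕ :=
  Nat.card {π : n.Partition //
    ∀ i ∈ π.parts, ∃ j, j < v ∧
      π.parts.count i ≡ j * a [MOD p] ∧
      j * (p * r + a) ≤ π.parts.count i ∧
      π.parts.count i ≤ j * (p * r + a) + p * (m - 1)}

/-- The extension of `b p a r m v` to the integers, declared to vanish at negative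
arguments (note that `b p a r m v 0 = 1`). -/
noncomputable def bZ (p a r m v : ℕ) (x : ℤ) : ℤ :=
  if 0 ≤ x then (b p a r m v x.toNat : ℤ) else 0

/-!
Put `q = pr + a`. Since `q` is coprime to `p` and `v ≤ p`, each admissible multiplicity is
`jq + pt` for exactly one pair `j < v`, `t < m`, so the generating function of `b` is
`∏ i ≥ 1, (1 + x ^ (iq) + ⋯ + x ^ (iq(v - 1))) (1 + x ^ (ip) + ⋯ + x ^ (ip(m - 1)))`.
Multiplying by `∏ i ≥ 1, (1 - x ^ (iq))` turns the first factor into `1 - x ^ (iqv)`, leaving a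
power series in `x ^ gcd(v, p)`, whose coefficient at `n` vanishes. On the other hand,
`∏ i ≥ 1, (1 - x ^ (iq))` is the pentagonal series in `x ^ q`, so the same coefficient is the
alternating sum of the recurrence.
-/

section PowerSeries

open PowerSeries PowerSeries.WithPiTopology

section Expand

variable {R : Type*} [CommRing R]

theorem X_pow_mem_range_expand {d : ℕ} (hd : d ≠ 0) {k : ℕ} (hk : d ∣ k) :
    (X : R⟦X⟧) ^ k ∈ (expand (R := R) d hd).range := by
  obtain ⟨l, rfl⟩ := hk
  exact ⟨X ^ l, by simp [pow_mul]⟩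

variable [TopologicalSpace R]

theorem coeff_eq_zero_of_hasProd_of_mem_range_expand [T2Space R] {ι : Type*} {f : ι → R⟦X⟧}
    {F : R⟦X⟧} (hF : HasProd f F) {d : ℕ} (hd : d ≠ 0)
    (hf : ∀ i, f i ∈ (expand (R := R) d hd).range) {n : ℕ} (hn : ¬ d ∣ n) : coeff n F = 0 := by
  refine tendsto_nhds_unique ((tendsto_iff_coeff_tendsto R _ _ _).mp hF n)
    (tendsto_const_nhds.congr fun s ↦ ?_)
  obtain ⟨g, hg⟩ := Subalgebra.prod_mem (t := s) _ fun i _ ↦ hf i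
  rw [← hg]
  exact (coeff_expand_of_not_dvd d hd g hn).symm

variable {q : ℕ} (hq : q ≠ 0)

theorem continuous_expand : Continuous (expand q hq : R⟦X⟧ → R⟦X⟧) := by
  refine continuous_iff_continuousAt.mpr fun f ↦ (tendsto_iff_coeff_tendsto R _ _ _).mpr fun n ↦ ?_
  simp only [coeff_expand]
  split_ifs
  · exact (continuous_coeff R _).continuousAt
  · exact tendsto_const_nhds

variable (R)

theorem hasProd_one_sub_X_pow_pow :
    HasProd (fun i ↦ (1 - (X ^ (i + 1)) ^ q : R⟦X⟧)) (expand q hq (pentagonalSeries R)) := by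
  have h := (hasProd_one_sub_X_pow R).map (expand q hq) (continuous_expand hq)
  simpa [Function.comp_def, ← pow_mul, mul_comm] using h

theorem hasSum_expand_pentagonalSeries :
    HasSum (fun k : ℤ ↦ (Int.negOnePow k : R⟦X⟧) * X ^ (q * pentagonal k))
      (expand q hq (pentagonalSeries R)) := by
  have h := (hasSum_pentagonalSeries R).map (expand q hq) (continuous_expand hq)
  simpa [Function.comp_def, pow_mul] using h

end Expand

section PentagonalRecurrence

variable {R : Type*} [CommRing R] [TopologicalSpace R] [IsTopologicalRing R]
  {g : ℤ → R} {q : ℕ}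

theorem hasSum_negOnePow_mul_sub_pentagonal (hg : ∀ x < 0, g x = 0) (hq : q ≠ 0) (n : ℕ) :
    HasSum (fun k : ℤ ↦ ((Int.negOnePow k : ℤ) : R) * g (n - q * pentagonal k))
      (coeff n (expand q hq (pentagonalSeries R) * mk fun k : ℕ ↦ g k)) := by
  have h := ((hasSum_expand_pentagonalSeries R hq).mul_right (mk fun k : ℕ ↦ g k)).map
    (coeff n) (continuous_coeff R n)
  refine h.congr_fun fun k ↦ ?_
  rw [Function.comp_apply, mul_assoc, ← zsmul_eq_mul, ← zsmul_eq_mul, map_zsmul, coeff_X_pow_mul']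
  congr 1
  split_ifs with hk
  · rw [coeff_mk, Nat.cast_sub hk, Nat.cast_mul]
  · exact hg _ (sub_neg.mpr (by exact_mod_cast not_le.mp hk))

theorem natCast_mul_pentagonal (q : ℕ) (k : ℤ) :
    (q : ℤ) * pentagonal k = q * k * (3 * k - 1) / 2 := by
  refine (Int.ediv_eq_of_eq_mul_right two_ne_zero ?_).symm
  linear_combination -(q : ℤ) * two_mul_natCast_pentagonal k

theorem natCast_mul_pentagonal_neg (q : ℕ) (k : ℤ) :
    (q : ℤ) * pentagonal (-k) = q * k * (3 * k + 1) / 2 := by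
  rw [natCast_mul_pentagonal]
  ring_nf

theorem hasSum_pentagonal_recurrence (hg : ∀ x < 0, g x = 0) (hq : q ≠ 0) {n : ℕ}
    (hcoeff : coeff n (expand q hq (pentagonalSeries R) * mk fun k : ℕ ↦ g k) = 0) :
    HasSum (fun j : ℕ ↦ (-1) ^ (j + 1 + 1) *
      (g (n - q * ((j : ℤ) + 1) * (3 * ((j : ℤ) + 1) - 1) / 2) +
        g (n - q * ((j : ℤ) + 1) * (3 * ((j : ℤ) + 1) + 1) / 2))) (g n) := by
  have h := (hasSum_negOnePow_mul_sub_pentagonal hg hq n).nat_add_neg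
  have pentagonal_zero : pentagonal 0 = 0 := by simp [pentagonal_def]
  rw [hcoeff, ← hasSum_nat_add_iff' 1] at h
  simp only [Finset.sum_range_one, Nat.cast_zero, neg_zero, Int.negOnePow_zero, Units.val_one,
    Int.cast_one, one_mul, pentagonal_zero, mul_zero, sub_zero, zero_add,
    sub_add_cancel_left] at h
  refine (neg_neg (g n) ▸ h.neg).congr_fun fun j ↦ ?_
  rw [Int.negOnePow_neg, natCast_mul_pentagonal, natCast_mul_pentagonal_neg,
    Int.coe_negOnePow_natCast]
  push_cast
  ring

end PentagonalRecurrence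

section MultiplicityGenFun

/-- The generating function of the partitions in which the multiplicity of each part lies
in `S`. A part that does not occur is unconstrained, even when `0 ∉ S`. -/
noncomputable def multiplicityGenFun (R : Type*) [CommSemiring R] (S : Finset ℕ) : R⟦X⟧ :=
  mk fun n ↦ (Nat.card {π : n.Partition // ∀ i ∈ π.parts, π.parts.count i ∈ S} : R)

theorem hasProd_multiplicityGenFun (R : Type*) [CommSemiring R] [TopologicalSpace R] [T2Space R]
    {S : Finset ℕ} (hS : 0 ∈ S) :
    HasProd (fun i ↦ ∑ c ∈ S, (X ^ (i + 1) : R⟦X⟧) ^ c) (multiplicityGenFun R S) := by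
  classical
  convert! Nat.Partition.hasProd_genFun (fun _ c ↦ if c ∈ S then (1 : R) else 0) using 1
  · ext1 i
    let f (c : ℕ) : R⟦X⟧ := if c ∈ S.erase 0 then (X ^ (i + 1)) ^ c else 0
    have hf : Function.support f ⊆ Set.range Nat.succ := fun c hc ↦ by
      simp_all [f, Nat.range_succ, Nat.pos_iff_ne_zero]
    calc ∑ c ∈ S, (X ^ (i + 1) : R⟦X⟧) ^ c
        = 1 + ∑ c ∈ S.erase 0, f c := by
          rw [← Finset.add_sum_erase S _ hS, pow_zero]
          exact congrArg (1 + ·) (Finset.sum_congr rfl fun c hc ↦ (if_pos hc).symm)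
      _ = 1 + ∑' j, f (j + 1) := by
          rw [Nat.succ_injective.tsum_eq hf, tsum_eq_sum fun c hc ↦ if_neg hc]
      _ = _ := by simp [f, pow_mul]
  · ext n
    simp_rw [multiplicityGenFun, coeff_mk, Nat.Partition.coeff_genFun, Nat.card_eq_fintype_card,
      Fintype.card_subtype, Finset.card_filter, Finsupp.prod, Finset.prod_boole]
    simp

end MultiplicityGenFun

end PowerSeries

section AdmissibleMultiplicities

/-- The multiplicities `jq + pt` with `j < v` and `t < m`. For `q = pr + a` these are the ones
counted by `b p a r m v`. -/
def admissibleMultiplicities (p q m v : ℕ) : Finset ℕ :=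
  (Finset.range v ×ˢ Finset.range m).image fun x ↦ x.1 * q + p * x.2

variable {p q m v : ℕ}

theorem zero_mem_admissibleMultiplicities (hm : 1 ≤ m) (hv : 1 ≤ v) :
    0 ∈ admissibleMultiplicities p q m v :=
  Finset.mem_image.mpr ⟨(0, 0),
    Finset.mk_mem_product (Finset.mem_range.mpr hv) (Finset.mem_range.mpr hm), by simp⟩

theorem mem_admissibleMultiplicities_iff (hp : 0 < p) (hm : 1 ≤ m) {c : ℕ} :
    c ∈ admissibleMultiplicities p q m v ↔
      ∃ j < v, c ≡ j * q [MOD p] ∧ j * q ≤ c ∧ c ≤ j * q + p * (m - 1) := by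
  simp only [admissibleMultiplicities, Finset.mem_image, Finset.mem_product, Finset.mem_range,
    Prod.exists]
  constructor
  · rintro ⟨j, t, ⟨hj, ht⟩, rfl⟩
    exact ⟨j, hj, by simp [Nat.ModEq], Nat.le_add_right _ _,
      Nat.add_le_add_left (Nat.mul_le_mul_left p (Nat.le_sub_one_of_lt ht)) _⟩
  · rintro ⟨j, hj, hmod, hle, hub⟩
    obtain ⟨t, ht⟩ := (Nat.modEq_iff_dvd' hle).mp hmod.symm
    have htm : t ≤ m - 1 := Nat.le_of_mul_le_mul_left (by lia) hp
    exact ⟨j, t, ⟨hj, by lia⟩, by lia⟩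

theorem injOn_mul_add_mul (hqp : q.Coprime p) (hvp : v ≤ p) :
    Set.InjOn (fun x : ℕ × ℕ ↦ x.1 * q + p * x.2) {x | x.1 < v} := by
  rintro ⟨j, t⟩ (hj : j < v) ⟨k, s⟩ (hk : k < v) (h : j * q + p * t = k * q + p * s)
  have hmod : j * q ≡ k * q [MOD p] := by simpa [Nat.ModEq] using congrArg (· % p) h
  obtain rfl : j = k := (Nat.ModEq.cancel_right_of_coprime hqp.symm hmod).eq_of_lt_of_lt
    (hj.trans_le hvp) (hk.trans_le hvp)
  rw [Nat.eq_of_mul_eq_mul_left (Nat.zero_lt_of_lt (hj.trans_le hvp)) (Nat.add_left_cancel h)]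

theorem one_sub_pow_mul_sum_pow_admissibleMultiplicities {S : Type*} [Ring S]
    (hqp : q.Coprime p) (hvp : v ≤ p) (x : S) :
    (1 - x ^ q) * ∑ c ∈ admissibleMultiplicities p q m v, x ^ c =
      (1 - x ^ (q * v)) * ∑ t ∈ Finset.range m, x ^ (p * t) := by
  have hinj := (injOn_mul_add_mul hqp hvp).mono
    (s₁ := ↑(Finset.range v ×ˢ Finset.range m)) fun x hx ↦ by simp_all
  have hfactor : ∑ c ∈ admissibleMultiplicities p q m v, x ^ c =
      (∑ j ∈ Finset.range v, (x ^ q) ^ j) * ∑ t ∈ Finset.range m, x ^ (p * t) := by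
    rw [admissibleMultiplicities, Finset.sum_image hinj, Finset.sum_mul_sum,
      ← Finset.sum_product']
    simp only [← pow_mul, ← pow_add, mul_comm]
  rw [hfactor, ← mul_assoc, mul_neg_geom_sum, pow_mul]

open PowerSeries PowerSeries.WithPiTopology in
theorem coeff_expand_pentagonalSeries_mul_multiplicityGenFun_eq_zero (R : Type*) [CommRing R]
    (hq : q ≠ 0) (hqp : q.Coprime p) (hm : 1 ≤ m) (hv : 1 ≤ v) (hvp : v ≤ p) {n : ℕ}
    (hn : ¬ v.gcd p ∣ n) :
    coeff n (expand q hq (pentagonalSeries R) *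
      multiplicityGenFun R (admissibleMultiplicities p q m v)) = 0 := by
  let _ : TopologicalSpace R := ⊥
  have _ : DiscreteTopology R := ⟨rfl⟩
  have hd : v.gcd p ≠ 0 := (Nat.gcd_pos_of_pos_left p hv).ne'
  refine coeff_eq_zero_of_hasProd_of_mem_range_expand ((hasProd_one_sub_X_pow_pow R hq).mul
    (hasProd_multiplicityGenFun R (zero_mem_admissibleMultiplicities hm hv))) hd (fun i ↦ ?_) hn
  have hmem {k : ℕ} (hk : v.gcd p ∣ k) :
      ((X : R⟦X⟧) ^ (i + 1)) ^ k ∈ (expand (R := R) (v.gcd p) hd).range :=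
    pow_mul (X : R⟦X⟧) (i + 1) k ▸ X_pow_mem_range_expand hd (hk.mul_left _)
  rw [one_sub_pow_mul_sum_pow_admissibleMultiplicities hqp hvp]
  exact mul_mem (sub_mem (one_mem _) (hmem ((Nat.gcd_dvd_left v p).mul_left q)))
    (sum_mem fun t _ ↦ hmem ((Nat.gcd_dvd_right v p).mul_right t))

end AdmissibleMultiplicities

section Recurrence

variable {p a r m v : ℕ}

theorem b_eq_card_count_mem_admissibleMultiplicities (hp : 0 < p) (hm : 1 ≤ m) (n : ℕ) :
    b p a r m v n = Nat.card {π : n.Partition //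
      ∀ i ∈ π.parts, π.parts.count i ∈ admissibleMultiplicities p (p * r + a) m v} := by
  have hmod (j : ℕ) : j * (p * r + a) % p = j * a % p := by
    rw [mul_add, mul_left_comm, Nat.mul_add_mod]
  simp only [b, mem_admissibleMultiplicities_iff hp hm, Nat.ModEq, hmod]

theorem bZ_natCast (n : ℕ) : bZ p a r m v n = b p a r m v n := by
  simp [bZ]

theorem bZ_of_neg {x : ℤ} (hx : x < 0) : bZ p a r m v x = 0 :=
  if_neg hx.not_ge

theorem mk_bZ_eq_multiplicityGenFun (hp : 0 < p) (hm : 1 ≤ m) :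
    (PowerSeries.mk fun n : ℕ ↦ bZ p a r m v n) =
      multiplicityGenFun ℤ (admissibleMultiplicities p (p * r + a) m v) := by
  simp only [multiplicityGenFun, bZ_natCast, b_eq_card_count_mem_admissibleMultiplicities hp hm]

end Recurrence

/-- **A pentagonal-number recurrence.** If `gcd(v, p)` does not divide `n`, then
`b_{v,r,a,m}(n) = Σ_{j=1}^∞ (-1)^{j+1} [b_{v,r,a,m}(n - (pr+a)j(3j-1)/2) +
b_{v,r,a,m}(n - (pr+a)j(3j+1)/2)]` (only finitely many terms are nonzero; the summation
index below is shifted, `j + 1` playing the role of `j ≥ 1`). -/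
theorem b_recurrence (p a r m v : ℕ) (hp : 0 < p) (ha : 0 < a)
    (hco : Nat.gcd a p = 1) (hm : 1 ≤ m) (hv : 1 ≤ v) (hvp : v ≤ p)
    (n : ℕ) (hn : ¬ Nat.gcd v p ∣ n) :
    (b p a r m v n : ℤ) =
      ∑' j : ℕ,
        (-1 : ℤ) ^ (j + 1 + 1) *
          (bZ p a r m v
              ((n : ℤ) - ((p : ℤ) * r + a) * ((j : ℤ) + 1) * (3 * ((j : ℤ) + 1) - 1) / 2) +
           bZ p a r m v
              ((n : ℤ) - ((p : ℤ) * r + a) * ((j : ℤ) + 1) * (3 * ((j : ℤ) + 1) + 1) / 2)) := by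
  have hq : p * r + a ≠ 0 := by lia
  have hqp : (p * r + a).Coprime p := by simpa using hco
  have hcoeff :=
    coeff_expand_pentagonalSeries_mul_multiplicityGenFun_eq_zero ℤ hq hqp hm hv hvp hn
  rw [← mk_bZ_eq_multiplicityGenFun hp hm] at hcoeff
  have hsum := hasSum_pentagonal_recurrence (fun _ ↦ bZ_of_neg) hq hcoeff
  rw [← bZ_natCast, ← hsum.tsum_eq]
  norm_cast
end

section
/- Let p ≥ 5 be prime, let a be a positive integer not divisible by p, let r ≥ 0 and m ≥ 1 be integers, and let t be an integer with 0 ≤ t < p such that 8·t·a⁻¹ + 1 is a quadratic nonresidue modulo p, where a⁻¹ denotes the multiplicative inverse of a modulo p. Then for all n ≥ 0, b_{4,r,a,m}(pn + t) ≡ 0 (mod 2). -/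
/-!
An allowed multiplicity is, in exactly one way, `j (pr + a) + p k` with `j < v` and `k < m`. For
`v = 4` the generating function is therefore `∏ i ≥ 1, (1 + y ^ i + y ^ (2i) + y ^ (3i))`, where
`y = x ^ (pr + a)`, times a power series in `x ^ p`. Modulo 2 the factors of the product are
`(1 + y ^ i) ^ 3 = (1 + y ^ i) ^ 2 (1 - y ^ i)`, so by Gauss's identity the product is the sum of
`y ^ (k (k + 1) / 2)` over all `k`. Hence an odd coefficient at `x ^ n` forces
`a k (k + 1) / 2 ≡ n (mod p)` for some `k`, that is, `8 n a⁻¹ + 1 = (2k + 1) ^ 2`.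

Gauss's identity is used only up to a power of `x`, and in that form it follows from Shanks's finite
version: with `D s = ∏ i < s, (1 - x ^ (2i + 1))`,
`D n * ∑ k ≤ 2n, x ^ (k (k + 1) / 2) = ∑ s ≤ n, x ^ (s (2n + 1)) D s ∏ s < i ≤ n, (1 - x ^ (2i))`,
which telescopes by induction on `n` and whose right-hand side is congruent to its `s = 0` term
modulo `x ^ (2n + 1)`.
-/

open Finset PowerSeries
open scoped PowerSeries.WithPiTopology

section TriangularNumbers

variable {R : Type*} [CommRing R] (x : R)

theorem dvd_prod_sub_one {ι : Type*} {d : R} {s : Finset ι} {f : ι → R}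
    (h : ∀ i ∈ s, d ∣ f i - 1) : d ∣ ∏ i ∈ s, f i - 1 := by
  refine prod_induction f (d ∣ · - 1) (fun u v hu hv => ?_) (by simp) h
  have key : u * v - 1 = (u - 1) * v + (v - 1) := by ring
  exact key ▸ dvd_add (hu.mul_right v) hv

theorem isCoprime_prod_one_sub_pow (n : ℕ) :
    IsCoprime (∏ i ∈ range n, (1 - x ^ (i + 1))) x :=
  .prod_left fun i _ => ⟨1, x ^ i, by ring⟩

theorem prod_one_sub_pow_odd_mul_prod_one_sub_pow_even (n : ℕ) :
    (∏ i ∈ range n, (1 - x ^ (2 * i + 1))) * ∏ i ∈ range n, (1 - x ^ (2 * (i + 1))) =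
      ∏ i ∈ range (2 * n), (1 - x ^ (i + 1)) := by
  induction n with
  | zero => simp
  | succ n ih =>
    rw [mul_add_one, prod_range_succ, prod_range_succ, prod_range_succ, prod_range_succ, ← ih]
    ring

theorem prod_one_add_pow_mul_prod_one_sub_pow (n : ℕ) :
    (∏ i ∈ range n, (1 + x ^ (i + 1))) * ∏ i ∈ range n, (1 - x ^ (i + 1)) =
      ∏ i ∈ range n, (1 - x ^ (2 * (i + 1))) := by
  rw [← prod_mul_distrib]
  exact prod_congr rfl fun i _ => by ring

theorem pow_dvd_prod_one_sub_pow_odd_mul_prod_one_add_pow_sub_one (n : ℕ) :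
    x ^ (n + 1) ∣
      (∏ i ∈ range n, (1 - x ^ (2 * i + 1))) * ∏ i ∈ range n, (1 + x ^ (i + 1)) - 1 := by
  refine ((isCoprime_prod_one_sub_pow x n).symm.pow_left).dvd_of_dvd_mul_right ?_
  have tail : x ^ (n + 1) ∣ ∏ i ∈ range n, (1 - x ^ (n + i + 1)) - 1 :=
    dvd_prod_sub_one fun i _ => ⟨-x ^ i, by ring⟩
  convert tail.mul_left (∏ i ∈ range n, (1 - x ^ (i + 1))) using 1
  rw [sub_one_mul, mul_assoc, prod_one_add_pow_mul_prod_one_sub_pow,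
    prod_one_sub_pow_odd_mul_prod_one_sub_pow_even, two_mul, prod_range_add]
  ring

/-- The `s`-th term `x ^ (s(2n+1)) (x; x²)_s (x²; x²)_n / (x²; x²)_s` of Shanks's finite form of
Gauss's triangular number identity, with the quotient written as a product over `s < i ≤ n`. -/
def shanksTerm (n s : ℕ) : R :=
  x ^ (s * (2 * n + 1)) * (∏ i ∈ range s, (1 - x ^ (2 * i + 1))) *
    ∏ i ∈ Ico (s + 1) (n + 1), (1 - x ^ (2 * i))

/-- The sequence whose differences measure how far `shanksTerm x (n + 1)` is from being
`1 - x ^ (2n+1)` times `shanksTerm x n`. The last product runs over `s ≤ i ≤ n`, so that its factor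
at `i = 0` makes the sequence vanish at `s = 0`. -/
def shanksCorrection (n s : ℕ) : R :=
  x ^ (s * (2 * n + 1)) * (∏ i ∈ range s, (1 - x ^ (2 * i + 1))) *
    ∏ i ∈ Ico s (n + 1), (1 - x ^ (2 * i))

theorem shanksTerm_zero_right (n : ℕ) :
    shanksTerm x n 0 = ∏ i ∈ range n, (1 - x ^ (2 * (i + 1))) := by
  rw [range_eq_Ico, prod_Ico_add' (fun i => 1 - x ^ (2 * i))]
  simp [shanksTerm]

theorem shanksTerm_self (n : ℕ) :
    shanksTerm x n n = x ^ (2 * n + 1).choose 2 * ∏ i ∈ range n, (1 - x ^ (2 * i + 1)) := by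
  have hexp : (2 * n + 1).choose 2 = n * (2 * n + 1) := by
    grind [Nat.add_one_mul_choose_eq (2 * n) 1, Nat.choose_one_right]
  simp [shanksTerm, hexp]

theorem shanksCorrection_zero_right (n : ℕ) : shanksCorrection x n 0 = 0 := by
  simp [shanksCorrection, prod_range_succ']

theorem shanksCorrection_succ_self (n : ℕ) :
    shanksCorrection x n (n + 1) =
      x ^ (2 * n + 2).choose 2 * ∏ i ∈ range (n + 1), (1 - x ^ (2 * i + 1)) := by
  have hexp : (2 * n + 2).choose 2 = (n + 1) * (2 * n + 1) := by
    grind [Nat.add_one_mul_choose_eq (2 * n + 1) 1, Nat.choose_one_right]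
  simp [shanksCorrection, hexp]

theorem shanksTerm_succ_left {n s : ℕ} (hs : s ≤ n) :
    shanksTerm x (n + 1) s = (1 - x ^ (2 * n + 1)) * shanksTerm x n s +
      (shanksCorrection x n (s + 1) - shanksCorrection x n s) := by
  rw [shanksTerm, shanksTerm, shanksCorrection, shanksCorrection, prod_range_succ,
    prod_Ico_succ_top (by lia : s + 1 ≤ n + 1), prod_eq_prod_Ico_succ_bot (by lia : s < n + 1)]
  ring

theorem prod_one_sub_pow_odd_mul_sum_pow_triangular (n : ℕ) :
    (∏ i ∈ range n, (1 - x ^ (2 * i + 1))) * ∑ k ∈ range (2 * n + 1), x ^ (k + 1).choose 2 =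
      ∑ s ∈ range (n + 1), shanksTerm x n s := by
  induction n with
  | zero => simp [shanksTerm]
  | succ n ih =>
    have recurrence : ∑ s ∈ range (n + 1), shanksTerm x (n + 1) s =
        (1 - x ^ (2 * n + 1)) * ∑ s ∈ range (n + 1), shanksTerm x n s +
          shanksCorrection x n (n + 1) := by
      rw [sum_congr rfl fun s hs => shanksTerm_succ_left x (mem_range_succ_iff.1 hs),
        sum_add_distrib, ← mul_sum, sum_range_sub, shanksCorrection_zero_right, sub_zero]
    rw [sum_range_succ (shanksTerm x (n + 1)), recurrence, ← ih, shanksCorrection_succ_self,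
      shanksTerm_self, prod_range_succ, mul_add_one, sum_range_succ _ (2 * n + 2),
      sum_range_succ _ (2 * n + 1)]
    ring

theorem pow_dvd_prod_one_sub_pow_odd_mul_sum_pow_triangular_sub (n : ℕ) :
    x ^ (2 * n + 1) ∣
      (∏ i ∈ range n, (1 - x ^ (2 * i + 1))) * ∑ k ∈ range (2 * n + 1), x ^ (k + 1).choose 2 -
        ∏ i ∈ range n, (1 - x ^ (2 * (i + 1))) := by
  rw [prod_one_sub_pow_odd_mul_sum_pow_triangular, sum_range_succ', shanksTerm_zero_right,
    add_sub_cancel_right]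
  refine dvd_sum fun s _ => dvd_mul_of_dvd_left (dvd_mul_of_dvd_left ?_ _) _
  exact pow_dvd_pow x (Nat.le_mul_of_pos_left _ s.succ_pos)

theorem pow_dvd_prod_one_add_pow_sq_mul_one_sub_pow_sub_sum_pow_triangular (n : ℕ) :
    x ^ (n + 1) ∣ ∏ i ∈ range n, ((1 + x ^ (i + 1)) ^ 2 * (1 - x ^ (i + 1))) -
      ∑ k ∈ range (2 * n + 1), x ^ (k + 1).choose 2 := by
  have hshanks := (pow_dvd_pow x (by lia : n + 1 ≤ 2 * n + 1)).trans
    (pow_dvd_prod_one_sub_pow_odd_mul_sum_pow_triangular_sub x n)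
  have heuler := pow_dvd_prod_one_sub_pow_odd_mul_prod_one_add_pow_sub_one x n
  rw [← prod_one_add_pow_mul_prod_one_sub_pow] at hshanks
  rw [prod_mul_distrib, prod_pow]
  generalize ∑ k ∈ range (2 * n + 1), x ^ (k + 1).choose 2 = T at *
  convert dvd_sub (heuler.mul_right T)
    (hshanks.mul_right (∏ i ∈ range n, (1 + x ^ (i + 1)))) using 1
  ring

variable [CharP R 2]

theorem pow_dvd_prod_one_add_pow_cube_sub_sum_pow_triangular (n : ℕ) :
    x ^ (n + 1) ∣ ∏ i ∈ range n, (1 + x ^ (i + 1)) ^ 3 -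
      ∑ k ∈ range (2 * n + 1), x ^ (k + 1).choose 2 := by
  simpa only [CharTwo.sub_eq_add, ← pow_succ] using
    pow_dvd_prod_one_add_pow_sq_mul_one_sub_pow_sub_sum_pow_triangular x n

theorem sum_range_four_pow_eq_one_add_pow_three : ∑ j ∈ range 4, x ^ j = (1 + x) ^ 3 := by
  simp only [sum_range_succ, sum_range_zero]
  linear_combination -(x + x ^ 2) * CharTwo.two_eq_zero (R := R)

end TriangularNumbers

section Multiplicities

/-- The multiplicities allowed to the parts of the partitions counted by `b p a r m v`, written as
`j * (p * r + a) + p * k`. -/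
def allowedMultiplicities (p a r m v : ℕ) : Finset ℕ :=
  (range v ×ˢ range m).image fun jk => jk.1 * (p * r + a) + p * jk.2

variable {p a r m v : ℕ}

theorem mem_allowedMultiplicities {c : ℕ} :
    c ∈ allowedMultiplicities p a r m v ↔ ∃ j < v, ∃ k < m, j * (p * r + a) + p * k = c := by
  simp [allowedMultiplicities, and_assoc]

theorem zero_mem_allowedMultiplicities (hv : 0 < v) (hm : 0 < m) :
    0 ∈ allowedMultiplicities p a r m v :=
  mem_allowedMultiplicities.2 ⟨0, hv, 0, hm, by simp⟩

theorem mem_allowedMultiplicities_iff_modEq (hm : 0 < m) {c : ℕ} :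
    c ∈ allowedMultiplicities p a r m v ↔ ∃ j, j < v ∧ c ≡ j * a [MOD p] ∧
      j * (p * r + a) ≤ c ∧ c ≤ j * (p * r + a) + p * (m - 1) := by
  have hmod (j : ℕ) : j * (p * r + a) ≡ j * a [MOD p] := by
    simp [Nat.ModEq, mul_add, mul_left_comm j p]
  rw [mem_allowedMultiplicities]
  refine exists_congr fun j => and_congr_right fun _ => ⟨?_, ?_⟩
  · rintro ⟨k, hk, rfl⟩
    refine ⟨by simpa [Nat.ModEq] using hmod j, Nat.le_add_right _ _, ?_⟩
    gcongr
    lia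
  · rintro ⟨hc, hlower, hupper⟩
    obtain ⟨k, hk⟩ := (Nat.modEq_iff_dvd' hlower).1 ((hmod j).trans hc.symm)
    obtain rfl : c = j * (p * r + a) + p * k := by lia
    rcases p.eq_zero_or_pos with rfl | hp
    · exact ⟨0, hm, by simp⟩
    · have : k ≤ m - 1 := Nat.le_of_mul_le_mul_left (Nat.le_of_add_le_add_left hupper) hp
      exact ⟨k, by lia, rfl⟩

theorem b_eq_card_count_mem_allowedMultiplicities (hm : 0 < m) (n : ℕ) :
    b p a r m v n = Nat.card {π : n.Partition //
      ∀ i ∈ π.parts, π.parts.count i ∈ allowedMultiplicities p a r m v} := by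
  simp only [b, mem_allowedMultiplicities_iff_modEq hm]

theorem injOn_allowedMultiplicities (hv : v ≤ p) (hpa : p.Coprime a) :
    Set.InjOn (fun jk : ℕ × ℕ => jk.1 * (p * r + a) + p * jk.2)
      (range v ×ˢ range m : Finset _) := by
  rintro ⟨j, k⟩ hjk ⟨j', k'⟩ hjk' h
  simp only [coe_product, Set.mem_prod, SetLike.mem_coe, mem_range] at hjk hjk' h
  have hmod : j * a ≡ j' * a [MOD p] := by
    simpa [Nat.ModEq, mul_add, mul_left_comm _ p, add_assoc] using congrArg (· % p) h
  obtain rfl : j = j' :=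
    (hmod.cancel_right_of_coprime hpa).eq_of_lt_of_lt (by lia) (by lia)
  obtain rfl : k = k' := Nat.eq_of_mul_eq_mul_left (by lia) (Nat.add_left_cancel h)
  rfl

theorem sum_allowedMultiplicities_pow {R : Type*} [CommSemiring R] (y : R) (hv : v ≤ p)
    (hpa : p.Coprime a) :
    ∑ c ∈ allowedMultiplicities p a r m v, y ^ c =
      (∑ j ∈ range v, (y ^ (p * r + a)) ^ j) * ∑ k ∈ range m, (y ^ p) ^ k := by
  rw [allowedMultiplicities, sum_image (injOn_allowedMultiplicities hv hpa), sum_product,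
    sum_mul_sum]
  refine sum_congr rfl fun j _ => sum_congr rfl fun k _ => ?_
  ring

end Multiplicities

section GeneratingFunctions

instance charP_powerSeries (R : Type*) [CommRing R] (p : ℕ) [CharP R p] : CharP R⟦X⟧ p :=
  charP_of_injective_ringHom C_injective p

theorem hasProd_powerSeriesMk_card_count_mem (R : Type*) [CommSemiring R] [TopologicalSpace R]
    [T2Space R] {S : Finset ℕ} (h0 : 0 ∈ S) :
    HasProd (fun i => ∑ c ∈ S, ((X : R⟦X⟧) ^ (i + 1)) ^ c)
      (PowerSeries.mk fun n =>
        (Nat.card {π : n.Partition // ∀ i ∈ π.parts, π.parts.count i ∈ S} : R)) := by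
  classical
  convert! Nat.Partition.hasProd_genFun (fun _ c => if c ∈ S then (1 : R) else 0) using 1
  · ext1 i
    have hlt {c : ℕ} (hc : c ∈ S) : c < S.sup id + 1 := Nat.lt_succ_of_le (le_sup (f := id) hc)
    have hS : ∑ c ∈ S, ((X : R⟦X⟧) ^ (i + 1)) ^ c =
        ∑ c ∈ range (S.sup id + 1), (if c ∈ S then (1 : R) else 0) • X ^ ((i + 1) * c) := by
      simp only [ite_smul, one_smul, zero_smul, sum_ite_mem, pow_mul]
      rw [inter_eq_right.2 fun c hc => mem_range.2 (hlt hc)]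
    rw [hS, sum_range_succ', add_comm, tsum_eq_sum (s := range (S.sup id))]
    · simp [h0]
    · intro j hj
      simp [mt hlt (by simpa using hj : ¬ j + 1 < S.sup id + 1)]
  · ext n
    simp_rw [Nat.Partition.coeff_genFun, coeff_mk, Finsupp.prod, prod_boole,
      Nat.card_eq_fintype_card, Fintype.card_subtype, natCast_card_filter]
    simp

theorem coeff_X_pow_mul_expand_of_not_modEq {R : Type*} [CommRing R] {p e n : ℕ} (hp : p ≠ 0)
    (h : ¬ e ≡ n [MOD p]) (f : R⟦X⟧) : coeff n (X ^ e * expand p hp f) = 0 := by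
  rw [coeff_X_pow_mul']
  split_ifs with he
  · exact coeff_expand_of_not_dvd p hp f fun hdvd => h ((Nat.modEq_iff_dvd' he).2 hdvd)
  · rfl

theorem coeff_prod_one_add_pow_cube_mul_expand_eq_zero {R : Type*} [CommRing R] [CharP R 2]
    {p s n M : ℕ} (hp : p ≠ 0) (hs : s ≠ 0) (hM : n ≤ M)
    (h : ∀ k : ℕ, ¬ s * (k + 1).choose 2 ≡ n [MOD p]) (f : R⟦X⟧) :
    coeff n ((∏ i ∈ range M, (1 + (X ^ s) ^ (i + 1)) ^ 3) * expand p hp f) = 0 := by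
  obtain ⟨g, hg⟩ := pow_dvd_prod_one_add_pow_cube_sub_sum_pow_triangular (X ^ s : R⟦X⟧) M
  have hlt : n < s * (M + 1) :=
    (Nat.lt_succ_of_le hM).trans_le (Nat.le_mul_of_pos_left _ (Nat.pos_of_ne_zero hs))
  simp only [← pow_mul] at hg ⊢
  rw [sub_eq_iff_eq_add.1 hg, add_mul, map_add, mul_assoc, coeff_X_pow_mul', if_neg hlt.not_ge,
    zero_add, sum_mul, map_sum]
  exact sum_eq_zero fun k _ => coeff_X_pow_mul_expand_of_not_modEq hp (h k) f

end GeneratingFunctions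

theorem even_b_four_of_forall_not_modEq {p a r m n : ℕ} (hp : 4 ≤ p) (hpa : p.Coprime a)
    (hm : 0 < m) (h : ∀ k : ℕ, ¬ a * (k + 1).choose 2 ≡ n [MOD p]) : Even (b p a r m 4 n) := by
  let : TopologicalSpace (ZMod 2) := ⊥
  have : DiscreteTopology (ZMod 2) := ⟨rfl⟩
  have hp0 : p ≠ 0 := by lia
  have hs0 : p * r + a ≠ 0 := by
    intro hs
    obtain rfl : a = 0 := by lia
    simp_all
  have hs (k : ℕ) : ¬ (p * r + a) * (k + 1).choose 2 ≡ n [MOD p] := by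
    simpa [Nat.ModEq, add_mul, mul_assoc] using h k
  have hfactor (M : ℕ) :
      ∏ i ∈ range M, ∑ c ∈ allowedMultiplicities p a r m 4, ((X : (ZMod 2)⟦X⟧) ^ (i + 1)) ^ c =
        (∏ i ∈ range M, (1 + (X ^ (p * r + a)) ^ (i + 1)) ^ 3) *
          expand p hp0 (∏ i ∈ range M, ∑ k ∈ range m, (X ^ (i + 1)) ^ k) := by
    simp only [sum_allowedMultiplicities_pow _ hp hpa, prod_mul_distrib,
      sum_range_four_pow_eq_one_add_pow_three, map_prod, map_sum, map_pow, expand_X,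
      pow_right_comm X _ (_ + 1)]
  have hlim := (hasProd_powerSeriesMk_card_count_mem (ZMod 2)
    (zero_mem_allowedMultiplicities (p := p) (a := a) (r := r) four_pos hm)).tendsto_prod_nat
  have hcoeff := (WithPiTopology.tendsto_iff_coeff_tendsto _ _ _ _).1 hlim n
  simp only [hfactor, coeff_mk, ← b_eq_card_count_mem_allowedMultiplicities hm] at hcoeff
  rw [← ZMod.natCast_eq_zero_iff_even]
  refine tendsto_nhds_unique hcoeff (tendsto_const_nhds.congr' ?_)
  filter_upwards [Filter.eventually_ge_atTop n] with M hM
  exact (coeff_prod_one_add_pow_cube_mul_expand_eq_zero hp0 hs0 hM hs _).symm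

theorem isSquare_of_mul_triangular_modEq {p a n k : ℕ} (hpa : p.Coprime a)
    (h : a * (k + 1).choose 2 ≡ n [MOD p]) :
    IsSquare (8 * (n : ZMod p) * (a : ZMod p)⁻¹ + 1) := by
  have hinv : (a : ZMod p) * (a : ZMod p)⁻¹ = 1 := ZMod.coe_mul_inv_eq_one a hpa.symm
  have hn : (a : ZMod p) * ((k + 1).choose 2 : ℕ) = n := by
    exact_mod_cast (ZMod.natCast_eq_natCast_iff _ _ _).2 h
  have htri : ((k : ZMod p) + 1) * k = ((k + 1).choose 2 : ℕ) * 2 := by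
    exact_mod_cast congrArg (Nat.cast (R := ZMod p))
      (k.choose_one_right ▸ Nat.add_one_mul_choose_eq k 1)
  refine ⟨2 * k + 1, ?_⟩
  linear_combination 8 * ((k + 1).choose 2 : ℕ) * hinv - 8 * (a : ZMod p)⁻¹ * hn - 4 * htri

theorem b_four_congruence_general (p a r m n : ℕ) (hp : 4 ≤ p) (hpa : p.Coprime a) (hm : 1 ≤ m)
    (hqnr : ¬ IsSquare (8 * (n : ZMod p) * (a : ZMod p)⁻¹ + 1)) :
    b p a r m 4 n % 2 = 0 :=
  Nat.even_iff.1 <| even_b_four_of_forall_not_modEq hp hpa hm fun _ h =>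
    hqnr (isSquare_of_mul_triangular_modEq hpa h)

/-- Let `p ≥ 5` be prime, `a` a positive integer not divisible by `p`, `r ≥ 0`, `m ≥ 1`,
and let `0 ≤ t < p` be such that `8·t·a⁻¹ + 1` is a quadratic nonresidue modulo `p`
(`a⁻¹` being the inverse of `a` modulo `p`). Then `b_{4,r,a,m}(pn + t) ≡ 0 (mod 2)` for
all `n ≥ 0`. -/
theorem b_four_congruence (p a r m t : ℕ) (hp : p.Prime) (hp5 : 5 ≤ p)
    (ha : 0 < a) (hpa : ¬ p ∣ a) (hm : 1 ≤ m) (ht : t < p)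
    (hqnr : ¬ IsSquare (8 * (t : ZMod p) * (a : ZMod p)⁻¹ + 1)) :
    ∀ n : ℕ, b p a r m 4 (p * n + t) % 2 = 0 :=
  fun n => b_four_congruence_general p a r m (p * n + t) (by lia)
    ((hp.coprime_iff_not_dvd).2 hpa) hm (by simpa using hqnr)
end

section
/- For every natural number n, b_{2,r,a,m}(n) ≡ Σ p(k) (mod 2), where the (finite) sum is over all triples (s, j, k) with s, j ∈ ℤ, k ∈ ℤ_{≥0}, and n = s(pr + a)(3s + 1)/2 + pm·j(3j + 1)/2 + pk, and where p(k) denotes the number of partitions of k. -/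
/-!
Put `c = pr + a` and `φ(q) = ∏ (1 - q^i)`. The multiplicities allowed by `b_{v,r,a,m}` are the
numbers `jc + pk` with `j < v` and `k < m`. When `p` divides none of `a, 2a, …, (v - 1)a`, each of
them arises from only one pair `(j, k)`, so a part of size `i` contributes the factor
`(1 + q^(ic) + ⋯ + q^((v-1)ic)) (1 + q^(ip) + ⋯ + q^((m-1)ip))`,
and the generating function is `φ(q^(vc)) φ(q^(pm)) / (φ(q^c) φ(q^p))`. For `v = 2`, Frobenius
turns `φ(q^(2c))` into `φ(q^c)²` modulo `2`, leaving `φ(q^c) φ(q^(pm)) / φ(q^p)`. Euler's pentagonal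
number theorem expands the numerator, and `1 / φ(q^p) = ∑ p(k) q^(pk)`.
-/

open PowerSeries PowerSeries.WithPiTopology Finset Filter

section Multiplicities

/-- The multiplicities `j * c + p * k` with `j < v` and `k < m`. For `c = p * r + a` these are the
multiplicities allowed in the partitions counted by `b p a r m v`. -/
def multiplicities (p c v m : ℕ) : Finset ℕ :=
  (range v ×ˢ range m).image fun x ↦ x.1 * c + p * x.2

variable {p a r v m : ℕ}

theorem mem_multiplicities_iff (hp : 0 < p) (hm : 0 < m) (x : ℕ) :
    x ∈ multiplicities p (p * r + a) v m ↔
      ∃ j, j < v ∧ x ≡ j * a [MOD p] ∧ j * (p * r + a) ≤ x ∧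
        x ≤ j * (p * r + a) + p * (m - 1) := by
  have modEq_iff_dvd (j y : ℕ) : j * (p * r + a) + y ≡ j * a [MOD p] ↔ p ∣ y := by
    rw [show j * (p * r + a) + y = j * a + (p * (j * r) + y) by ring, Nat.add_modEq_left_iff,
      Nat.dvd_add_right (dvd_mul_right p _)]
  have mul_le_iff (k : ℕ) : p * k ≤ p * (m - 1) ↔ k < m := by
    rw [Nat.mul_le_mul_left_iff hp]
    omega
  simp only [multiplicities, mem_image, mem_product, mem_range, Prod.exists]
  constructor
  · rintro ⟨j, k, ⟨hj, hk⟩, rfl⟩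
    exact ⟨j, hj, (modEq_iff_dvd j _).2 (dvd_mul_right p k), Nat.le_add_right _ _,
      Nat.add_le_add_left ((mul_le_iff k).2 hk) _⟩
  · rintro ⟨j, hj, hmod, hle, hge⟩
    obtain ⟨y, rfl⟩ := Nat.exists_eq_add_of_le hle
    obtain ⟨k, rfl⟩ := (modEq_iff_dvd j y).1 hmod
    exact ⟨j, k, ⟨hj, (mul_le_iff k).1 (Nat.add_le_add_iff_left.1 hge)⟩, rfl⟩

theorem b_eq_card_count_mem_multiplicities (hp : 0 < p) (hm : 0 < m) (n : ℕ) :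
    b p a r m v n = Nat.card {π : n.Partition //
      ∀ i ∈ π.parts, π.parts.count i ∈ multiplicities p (p * r + a) v m} := by
  simp only [b, mem_multiplicities_iff hp hm]

theorem injOn_mul_add_mul_s12 {c : ℕ} (hp : 0 < p) (hc : ∀ d, 0 < d → d < v → ¬ p ∣ d * c) :
    Set.InjOn (fun x : ℕ × ℕ ↦ x.1 * c + p * x.2) (range v ×ˢ range m : Finset (ℕ × ℕ)) := by
  have not_lt_of_eq {j j' k k' : ℕ} (hj' : j' < v) (h : j * c + p * k = j' * c + p * k') :
      ¬ j < j' := by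
    intro hlt
    obtain ⟨d, rfl⟩ := Nat.exists_eq_add_of_lt hlt
    refine hc (d + 1) (by omega) (by omega) ?_
    rw [← Nat.dvd_add_left (dvd_mul_right p k')]
    exact ⟨k, by linarith⟩
  rintro ⟨j, k⟩ hx ⟨j', k'⟩ hx' h
  simp only [coe_product, coe_range, Set.mem_prod, Set.mem_Iio] at hx hx' h
  obtain rfl : j = j' :=
    le_antisymm (le_of_not_gt (not_lt_of_eq hx.1 h.symm)) (le_of_not_gt (not_lt_of_eq hx'.1 h))
  rw [Nat.add_left_cancel_iff, Nat.mul_right_inj hp.ne'] at h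
  rw [h]

theorem sum_pow_multiplicities {S : Type*} [CommSemiring S] {c : ℕ} (hp : 0 < p)
    (hc : ∀ d, 0 < d → d < v → ¬ p ∣ d * c) (y : S) :
    ∑ x ∈ multiplicities p c v m, y ^ x =
      (∑ j ∈ range v, (y ^ c) ^ j) * ∑ k ∈ range m, (y ^ p) ^ k := by
  rw [multiplicities, sum_image (injOn_mul_add_mul_s12 hp hc), sum_mul_sum, ← sum_product']
  exact sum_congr rfl fun x _ ↦ by rw [pow_add, mul_comm x.1, pow_mul, pow_mul]

end Multiplicities

section GeneratingFunctions

theorem hasProd_sum_X_pow_card_count_mem {R : Type*} [CommSemiring R] [TopologicalSpace R]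
    [T2Space R] [IsTopologicalSemiring R] {s : Finset ℕ} (hs : 0 ∈ s) :
    HasProd (fun i ↦ ∑ x ∈ s, (X ^ (i + 1) : R⟦X⟧) ^ x)
      (PowerSeries.mk fun n ↦
        (Nat.card {π : n.Partition // ∀ i ∈ π.parts, π.parts.count i ∈ s} : R)) := by
  classical
  let f : ℕ → ℕ → R := fun _ x ↦ if x ∈ s then 1 else 0
  have hfactor (i : ℕ) : 1 + ∑' j, f (i + 1) (j + 1) • (X : R⟦X⟧) ^ ((i + 1) * (j + 1)) =
      ∑ x ∈ s, (X ^ (i + 1)) ^ x := by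
    let g : ℕ → R⟦X⟧ := fun x ↦ f (i + 1) x • X ^ ((i + 1) * x)
    have hg : Summable fun j ↦ g (j + 1) := Nat.Partition.summable_genFun_term f i
    calc _ = g 0 + ∑' j, g (j + 1) := by simp [g, f, hs]
      _ = ∑' x, g x := (tsum_eq_zero_add' hg).symm
      _ = ∑ x ∈ s, g x := tsum_eq_sum fun x hx ↦ by simp [g, f, hx]
      _ = _ := sum_congr rfl fun x hx ↦ by simp [g, f, hx, pow_mul]
  have hseries : PowerSeries.mk (fun n ↦
      (Nat.card {π : n.Partition // ∀ i ∈ π.parts, π.parts.count i ∈ s} : R)) =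
      Nat.Partition.genFun f := by
    ext n
    simp only [coeff_mk, Nat.Partition.coeff_genFun, Finsupp.prod, f, prod_boole]
    simp [Nat.card_eq_fintype_card, Fintype.card_subtype]
  rw [hseries]
  exact (Nat.Partition.hasProd_genFun f).congr_fun fun i ↦ (hfactor i).symm

variable (R : Type*) [CommRing R]

theorem continuous_expand_s12 [TopologicalSpace R] (k : ℕ) (hk : k ≠ 0) :
    Continuous (expand k hk : R⟦X⟧ →ₐ[R] R⟦X⟧) := by
  refine continuous_iff_continuousAt.2 fun φ ↦ ?_
  rw [ContinuousAt, tendsto_iff_coeff_tendsto]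
  intro d
  simp_rw [coeff_expand]
  split_ifs
  · exact (continuous_coeff R _).continuousAt
  · exact tendsto_const_nhds

theorem hasProd_expand_pentagonalSeries [TopologicalSpace R] (k : ℕ) (hk : k ≠ 0) :
    HasProd (fun i ↦ 1 - (X ^ (i + 1) : R⟦X⟧) ^ k) (expand k hk (pentagonalSeries R)) := by
  convert (hasProd_one_sub_X_pow R).map (expand k hk : R⟦X⟧ →ₐ[R] R⟦X⟧)
    (continuous_expand_s12 R k hk) using 2 with i
  simp [← pow_mul, mul_comm]

/-- The generating function `∑ p(n) X ^ n` of the number of partitions. -/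
noncomputable def partitionSeries : R⟦X⟧ :=
  PowerSeries.mk fun n ↦ (Nat.card n.Partition : R)

theorem pentagonalSeries_mul_partitionSeries : pentagonalSeries R * partitionSeries R = 1 := by
  let _ : TopologicalSpace R := ⊥
  have _ : DiscreteTopology R := ⟨rfl⟩
  have hprod := (hasProd_one_sub_X_pow R).mul
    (Nat.Partition.hasProd_powerSeriesMk_card_restricted R fun _ ↦ True)
  have hfactor (i : ℕ) : (1 - X ^ (i + 1) : R⟦X⟧) *
      (if True then ∑' j : ℕ, X ^ ((i + 1) * j) else 1) = 1 := by
    simp_rw [if_true, pow_mul]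
    exact one_sub_mul_tsum_pow_of_constantCoeff_eq_zero (by simp)
  simp_rw [hfactor] at hprod
  simpa [partitionSeries, Nat.Partition.restricted, Nat.card_eq_fintype_card] using
    hprod.unique hasProd_one

theorem expand_pentagonalSeries_mul_expand_partitionSeries (k : ℕ) (hk : k ≠ 0) :
    expand k hk (pentagonalSeries R) * expand k hk (partitionSeries R) = 1 := by
  rw [← map_mul, pentagonalSeries_mul_partitionSeries, map_one]

theorem expand_mul_pentagonalSeries_eq_pow (ℓ : ℕ) [hℓ : Fact ℓ.Prime] [CharP R ℓ] (k : ℕ)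
    (hk : k ≠ 0) :
    expand (ℓ * k) (mul_ne_zero hℓ.out.ne_zero hk) (pentagonalSeries R) =
      expand k hk (pentagonalSeries R) ^ ℓ := by
  let _ : TopologicalSpace R := ⊥
  have _ : DiscreteTopology R := ⟨rfl⟩
  have _ : CharP R⟦X⟧ ℓ := charP_of_injective_ringHom (C_injective (R := R)) ℓ
  refine (hasProd_expand_pentagonalSeries R (ℓ * k) _).unique
    (((hasProd_expand_pentagonalSeries R k hk).pow ℓ).congr_fun fun i ↦ ?_)
  rw [sub_pow_char, one_pow, mul_comm ℓ, pow_mul]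

theorem mk_b_mul_expand_pentagonalSeries {p a r v m : ℕ} (hp : p ≠ 0) (hc : p * r + a ≠ 0)
    (hv : v ≠ 0) (hm : m ≠ 0) (hdvd : ∀ d, 0 < d → d < v → ¬ p ∣ d * a) :
    PowerSeries.mk (fun n ↦ (b p a r m v n : R)) *
        (expand (p * r + a) hc (pentagonalSeries R) * expand p hp (pentagonalSeries R)) =
      expand (v * (p * r + a)) (mul_ne_zero hv hc) (pentagonalSeries R) *
        expand (p * m) (mul_ne_zero hp hm) (pentagonalSeries R) := by
  let _ : TopologicalSpace R := ⊥
  have _ : DiscreteTopology R := ⟨rfl⟩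
  have hp' := Nat.pos_of_ne_zero hp
  have hm' := Nat.pos_of_ne_zero hm
  have hdvd' (d : ℕ) (hd : 0 < d) (hdv : d < v) : ¬ p ∣ d * (p * r + a) := by
    rw [mul_add, mul_left_comm, Nat.dvd_add_right (dvd_mul_right p _)]
    exact hdvd d hd hdv
  have hzero : 0 ∈ multiplicities p (p * r + a) v m :=
    (mem_multiplicities_iff hp' hm' 0).2 ⟨0, Nat.pos_of_ne_zero hv, by simp [Nat.ModEq.refl]⟩
  have hb := hasProd_sum_X_pow_card_count_mem (R := R) hzero
  simp_rw [← b_eq_card_count_mem_multiplicities hp' hm',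
    sum_pow_multiplicities hp' hdvd'] at hb
  refine (hb.mul ((hasProd_expand_pentagonalSeries R _ hc).mul
    (hasProd_expand_pentagonalSeries R p hp))).unique
    (((hasProd_expand_pentagonalSeries R _ _).mul
      (hasProd_expand_pentagonalSeries R _ _)).congr_fun fun i ↦ ?_)
  rw [mul_mul_mul_comm, geom_sum_mul_neg, geom_sum_mul_neg, ← pow_mul, ← pow_mul _ p,
    mul_comm v]

theorem mk_b_two_of_charTwo [CharP R 2] {p a r m : ℕ} (hp : p ≠ 0) (hc : p * r + a ≠ 0)
    (hm : m ≠ 0) (hpa : ¬ p ∣ a) :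
    PowerSeries.mk (fun n ↦ (b p a r m 2 n : R)) =
      expand (p * r + a) hc (pentagonalSeries R) *
        (expand (p * m) (mul_ne_zero hp hm) (pentagonalSeries R) *
          expand p hp (partitionSeries R)) := by
  have hdvd (d : ℕ) (hd : 0 < d) (hd2 : d < 2) : ¬ p ∣ d * a := by
    obtain rfl : d = 1 := by omega
    rwa [one_mul]
  have hgen := mk_b_mul_expand_pentagonalSeries R (r := r) hp hc two_ne_zero hm hdvd
  rw [expand_mul_pentagonalSeries_eq_pow R 2 _ hc] at hgen
  have hinv_c := expand_pentagonalSeries_mul_expand_partitionSeries R _ hc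
  have hinv_p := expand_pentagonalSeries_mul_expand_partitionSeries R p hp
  set B := PowerSeries.mk fun n ↦ (b p a r m 2 n : R)
  set φc := expand (p * r + a) hc (pentagonalSeries R)
  set φp := expand p hp (pentagonalSeries R)
  set φpm := expand (p * m) (mul_ne_zero hp hm) (pentagonalSeries R)
  set Pc := expand (p * r + a) hc (partitionSeries R)
  set Pp := expand p hp (partitionSeries R)
  calc B = B * (φc * φp) * (Pc * Pp) := by
        rw [mul_assoc, mul_mul_mul_comm, hinv_c, hinv_p, mul_one, mul_one]
    _ = φc * (φpm * Pp) * (φc * Pc) := by rw [hgen]; ring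
    _ = φc * (φpm * Pp) := by rw [hinv_c, mul_one]

end GeneratingFunctions

section MonomialSums

variable {ι κ : Type*} {e : ι → ℕ} {e' : κ → ℕ}

theorem tendsto_mul_cofinite_atTop (he : e.Injective) {k : ℕ} (hk : k ≠ 0) :
    Tendsto (fun i ↦ k * e i) cofinite atTop := by
  rw [← Nat.cofinite_eq_atTop]
  exact ((mul_right_injective₀ hk).comp he).tendsto_cofinite

theorem tendsto_add_cofinite_atTop (he : Tendsto e cofinite atTop)
    (he' : Tendsto e' cofinite atTop) :
    Tendsto (fun x : ι × κ ↦ e x.1 + e' x.2) cofinite atTop := by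
  rw [← coprod_cofinite]
  exact tendsto_sup.2
    ⟨tendsto_atTop_mono (fun _ ↦ Nat.le_add_right _ _) (he.comp tendsto_comap),
      tendsto_atTop_mono (fun _ ↦ Nat.le_add_left _ _) (he'.comp tendsto_comap)⟩

theorem summable_ite_eq_of_tendsto_cofinite {M : Type*} [AddCommMonoid M] [TopologicalSpace M]
    (he : Tendsto e cofinite atTop) (u : ι → M) (n : ℕ) :
    Summable fun i ↦ if n = e i then u i else 0 := by
  refine summable_of_hasFiniteSupport
    ((he.eventually_gt_atTop n : {i | ¬ n < e i}.Finite).subset fun i hi ↦ ?_)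
  have hni : n = e i := by
    by_contra h
    exact hi (if_neg h)
  exact hni.ge.not_gt

variable {R : Type*} [CommSemiring R] [TopologicalSpace R] {u : ι → R} {u' : κ → R} {F G : R⟦X⟧}

theorem hasSum_ite_eq_coeff_of_hasSum_monomial (hF : HasSum (fun i ↦ monomial (e i) (u i)) F)
    (n : ℕ) : HasSum (fun i ↦ if n = e i then u i else 0) (coeff n F) :=
  by
  simpa only [coeff_monomial] using (hasSum_iff_hasSum_coeff R).1 hF n

theorem hasSum_monomial_mul [T3Space R] [IsTopologicalSemiring R]
    (he : Tendsto e cofinite atTop) (he' : Tendsto e' cofinite atTop)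
    (hF : HasSum (fun i ↦ monomial (e i) (u i)) F)
    (hG : HasSum (fun i ↦ monomial (e' i) (u' i)) G) :
    HasSum (fun x : ι × κ ↦ monomial (e x.1 + e' x.2) (u x.1 * u' x.2)) (F * G) := by
  have _ : T3Space R⟦X⟧ := inferInstanceAs (T3Space ((Unit →₀ ℕ) → R))
  have hsummable : Summable fun x : ι × κ ↦ monomial (e x.1 + e' x.2) (u x.1 * u' x.2) := by
    refine (summable_iff_summable_coeff R).2 fun n ↦ ?_
    simp_rw [coeff_monomial]
    exact summable_ite_eq_of_tendsto_cofinite (tendsto_add_cofinite_atTop he he') _ n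
  have hterm (x : ι × κ) : monomial (e x.1 + e' x.2) (u x.1 * u' x.2) =
      monomial (e x.1) (u x.1) * monomial (e' x.2) (u' x.2) :=
    (monomial_mul_monomial _ _ _ _).symm
  rw [funext hterm] at hsummable ⊢
  exact HasSum.mul (f := fun i ↦ monomial (e i) (u i)) (g := fun i ↦ monomial (e' i) (u' i))
    hF hG hsummable

end MonomialSums

theorem mul_add_ne_zero_of_not_dvd {p a : ℕ} (r : ℕ) (hpa : ¬ p ∣ a) : p * r + a ≠ 0 :=
  fun h ↦ hpa (Nat.eq_zero_of_add_eq_zero_left h ▸ dvd_zero p)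

theorem intCast_negOnePow_of_charTwo {R : Type*} [Ring R] [CharP R 2] (s : ℤ) :
    ((s.negOnePow : ℤ) : R) = 1 := by
  rcases s.even_or_odd with hs | hs
  · simp [Int.negOnePow_even s hs]
  · simp [Int.negOnePow_odd s hs, CharTwo.neg_eq]

section TripleSum

variable (R : Type*) [CommRing R] [TopologicalSpace R]

theorem hasSum_expand_pentagonalSeries_s12 (k : ℕ) (hk : k ≠ 0) :
    HasSum (fun s : ℤ ↦ monomial (k * pentagonal (-s)) ((s.negOnePow : ℤ) : R))
      (expand k hk (pentagonalSeries R)) := by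
  have h := (hasSum_pentagonalSeries R).map (expand k hk : R⟦X⟧ →ₐ[R] R⟦X⟧)
    (continuous_expand_s12 R k hk)
  rw [← (Equiv.neg ℤ).hasSum_iff] at h
  refine h.congr_fun fun s ↦ ?_
  simp only [Function.comp_apply, Equiv.neg_apply, Int.negOnePow_neg, map_mul, map_pow,
    map_intCast, expand_X, ← pow_mul, monomial_eq_C_mul_X_pow]

theorem hasSum_expand_partitionSeries (k : ℕ) (hk : k ≠ 0) :
    HasSum (fun l ↦ monomial (k * l) (Nat.card (Nat.Partition l) : R))
      (expand k hk (partitionSeries R)) := by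
  refine ((hasSum_of_monomials_self (partitionSeries R)).map
    (expand k hk : R⟦X⟧ →ₐ[R] R⟦X⟧) (continuous_expand_s12 R k hk)).congr_fun fun l ↦ ?_
  simp [partitionSeries]

/-- The exponent of the term indexed by `(s, j, k)` in the expansion of `φ(q^c) φ(q^d) / φ(q^p)`,
where `φ(q) = ∏ (1 - q^i)`. The arguments of `pentagonal` are negated because
`pentagonal s = s(3s - 1)/2`. -/
def tripleExponent (c d p : ℕ) (x : ℤ × ℤ × ℕ) : ℕ :=
  c * pentagonal (-x.1) + (d * pentagonal (-x.2.1) + p * x.2.2)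

theorem natCast_tripleExponent (c d p : ℕ) (x : ℤ × ℤ × ℕ) :
    (tripleExponent c d p x : ℤ) =
      x.1 * c * (3 * x.1 + 1) / 2 + d * x.2.1 * (3 * x.2.1 + 1) / 2 + p * x.2.2 := by
  have mul_pentagonal_neg (c : ℕ) (s : ℤ) :
      c * s * (3 * s + 1) / 2 = c * (pentagonal (-s) : ℤ) := by
    rw [mul_assoc, ← two_mul_natCast_pentagonal_neg, mul_left_comm,
      Int.mul_ediv_cancel_left _ two_ne_zero]
  rw [mul_comm x.1, mul_pentagonal_neg, mul_pentagonal_neg, add_assoc]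
  simp only [tripleExponent, Nat.cast_add, Nat.cast_mul]

theorem tendsto_mul_pentagonal_neg {c : ℕ} (hc : c ≠ 0) :
    Tendsto (fun s : ℤ ↦ c * pentagonal (-s)) cofinite atTop :=
  tendsto_mul_cofinite_atTop (pentagonal_injective.comp neg_injective) hc

theorem tendsto_mul_pentagonal_neg_add_mul {d p : ℕ} (hd : d ≠ 0) (hp : p ≠ 0) :
    Tendsto (fun x : ℤ × ℕ ↦ d * pentagonal (-x.1) + p * x.2) cofinite atTop :=
  tendsto_add_cofinite_atTop (e := fun s : ℤ ↦ d * pentagonal (-s)) (e' := fun l ↦ p * l)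
    (tendsto_mul_pentagonal_neg hd) (tendsto_mul_cofinite_atTop Function.injective_id hp)

theorem tendsto_tripleExponent {c d p : ℕ} (hc : c ≠ 0) (hd : d ≠ 0) (hp : p ≠ 0) :
    Tendsto (tripleExponent c d p) cofinite atTop :=
  tendsto_add_cofinite_atTop (e := fun s : ℤ ↦ c * pentagonal (-s))
    (e' := fun x : ℤ × ℕ ↦ d * pentagonal (-x.1) + p * x.2)
    (tendsto_mul_pentagonal_neg hc) (tendsto_mul_pentagonal_neg_add_mul hd hp)

theorem hasSum_monomial_tripleExponent [T3Space R] [IsTopologicalRing R] {c d p : ℕ}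
    (hc : c ≠ 0) (hd : d ≠ 0) (hp : p ≠ 0) :
    HasSum (fun x : ℤ × ℤ × ℕ ↦ monomial (tripleExponent c d p x)
        ((x.1.negOnePow : ℤ) * ((x.2.1.negOnePow : ℤ) * (Nat.card (Nat.Partition x.2.2) : R))))
      (expand c hc (pentagonalSeries R) *
        (expand d hd (pentagonalSeries R) * expand p hp (partitionSeries R))) := by
  let sign (s : ℤ) : R := (s.negOnePow : ℤ)
  let card (l : ℕ) : R := Nat.card (Nat.Partition l)
  have hsum_jk := hasSum_monomial_mul (e' := fun l ↦ p * l) (u := sign) (u' := card)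
    (tendsto_mul_pentagonal_neg hd) (tendsto_mul_cofinite_atTop Function.injective_id hp)
    (hasSum_expand_pentagonalSeries_s12 R d hd) (hasSum_expand_partitionSeries R p hp)
  exact hasSum_monomial_mul (e := fun s : ℤ ↦ c * pentagonal (-s))
    (e' := fun x : ℤ × ℕ ↦ d * pentagonal (-x.1) + p * x.2)
    (u := sign) (u' := fun x ↦ sign x.1 * card x.2)
    (tendsto_mul_pentagonal_neg hc) (tendsto_mul_pentagonal_neg_add_mul hd hp)
    (hasSum_expand_pentagonalSeries_s12 R c hc) hsum_jk

theorem hasSum_ite_eq_tripleExponent_b_two [T3Space R] [IsTopologicalRing R] [CharP R 2]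
    {p a r m : ℕ} (hp : p ≠ 0) (hm : m ≠ 0) (hpa : ¬ p ∣ a) (n : ℕ) :
    HasSum (fun x : ℤ × ℤ × ℕ ↦ if n = tripleExponent (p * r + a) (p * m) p x
      then (Nat.card (Nat.Partition x.2.2) : R) else 0) (b p a r m 2 n) := by
  have hc := mul_add_ne_zero_of_not_dvd r hpa
  have h := hasSum_ite_eq_coeff_of_hasSum_monomial
    (hasSum_monomial_tripleExponent R hc (mul_ne_zero hp hm) hp) n
  rw [← mk_b_two_of_charTwo R hp hc hm hpa, coeff_mk] at h
  simpa only [intCast_negOnePow_of_charTwo, one_mul] using h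

end TripleSum

theorem b_two_mod_two_general (p a r m : ℕ) (hp : p ≠ 0) (hpa : ¬ p ∣ a) (hm : m ≠ 0) (n : ℕ) :
    (b p a r m 2 n : ℤ) ≡
      (∑' x : ℤ × ℤ × ℕ,
        if (n : ℤ) = x.1 * ((p : ℤ) * r + a) * (3 * x.1 + 1) / 2
            + (p : ℤ) * m * x.2.1 * (3 * x.2.1 + 1) / 2 + (p : ℤ) * x.2.2
        then (Nat.card (Nat.Partition x.2.2) : ℤ) else 0) [ZMOD 2] := by
  have hc := mul_add_ne_zero_of_not_dvd r hpa
  let e := tripleExponent (p * r + a) (p * m) p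
  have hint : Summable fun x ↦ if n = e x then (Nat.card (Nat.Partition x.2.2) : ℤ) else 0 :=
    summable_ite_eq_of_tendsto_cofinite (tendsto_tripleExponent hc (mul_ne_zero hp hm) hp) _ n
  have hcond (x : ℤ × ℤ × ℕ) : (n : ℤ) = x.1 * ((p : ℤ) * r + a) * (3 * x.1 + 1) / 2
      + (p : ℤ) * m * x.2.1 * (3 * x.2.1 + 1) / 2 + (p : ℤ) * x.2.2 ↔ n = e x := by
    rw [← Nat.cast_inj (R := ℤ) (m := n), natCast_tripleExponent, Nat.cast_add, Nat.cast_mul,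
      Nat.cast_mul]
  simp_rw [hcond]
  refine (ZMod.intCast_eq_intCast_iff _ _ 2).1 ?_
  rw [Int.cast_natCast]
  have hcast := hint.hasSum.map (Int.castRingHom (ZMod 2)) continuous_of_discreteTopology
  refine (hasSum_ite_eq_tripleExponent_b_two (ZMod 2) hp hm hpa n).unique
    (hcast.congr_fun fun x ↦ ?_)
  rw [Function.comp_apply, apply_ite (Int.castRingHom (ZMod 2)), map_natCast, map_zero]

/-- For every `n`, `b_{2,r,a,m}(n) ≡ Σ p(k) (mod 2)`, summed over all triples
`(s, j, k)` with `s, j ∈ ℤ`, `k ∈ ℤ≥0` and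
`n = s(pr+a)(3s+1)/2 + pm·j(3j+1)/2 + pk`, where `p(k)` is the number of
partitions of `k`. Only finitely many terms of the sum are nonzero. -/
theorem b_two_mod_two (p a r m : ℕ) (hp : 2 ≤ p) (ha : 0 < a)
    (hco : Nat.gcd a p = 1) (hm : 1 ≤ m) (n : ℕ) :
    (b p a r m 2 n : ℤ) ≡
      (∑' x : ℤ × ℤ × ℕ,
        if (n : ℤ) = x.1 * ((p : ℤ) * r + a) * (3 * x.1 + 1) / 2
            + (p : ℤ) * m * x.2.1 * (3 * x.2.1 + 1) / 2 + (p : ℤ) * x.2.2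
        then (Nat.card (Nat.Partition x.2.2) : ℤ) else 0) [ZMOD 2] := by
  have hpa : ¬ p ∣ a := fun h ↦ by
    have := Nat.eq_one_of_dvd_coprimes hco h dvd_rfl
    omega
  exact b_two_mod_two_general p a r m (by omega) hpa (by omega) n
end

section
/- For every natural number n, b_{4,r,a,m}(n) ≡ Σ p(k) (mod 2), where the (finite) sum is over all triples (s, j, k) with s ∈ ℤ_{≥0}, j ∈ ℤ, k ∈ ℤ_{≥0}, and n = (pr + a)·s(s + 1)/2 + pm·j(3j + 1)/2 + pk, and where p(k) denotes the number of partitions of k. -/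
/-!
Write `P = ∏ (1 - q ^ (n + 1))`, `c = p r + a` and `ψ = ∑ q ^ (s (s + 1) / 2)`. The admissible
multiplicities are the numbers `j c + p l` with `j < v` and `l < m`, each represented once, so
summing two geometric progressions for each part size gives
`(∑ b(n) q ^ n) P(q ^ c) P(q ^ p) = P(q ^ (v c)) P(q ^ (p m))`. For `v = 4`, Gauss' identity
`P ψ = P(q ^ 2) ^ 2` and Frobenius turn `P(q ^ (4 c))` into `P(q ^ c) ψ(q ^ c)` modulo two. Since
`1 / P` generates the partition numbers, this leaves
`∑ b(n) q ^ n ≡ ψ(q ^ c) P(q ^ (p m)) / P(q ^ p)`, and modulo two the signs in Euler's expansion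
of `P` into pentagonal powers disappear.
-/

namespace PartitionParity

open Finset

/-- The triangular numbers `0, 1, 3, 6, …`, which are the exponents of Gauss' theta series. -/
def triangular (n : ℕ) : ℕ := n * (n + 1) / 2

theorem two_mul_triangular (n : ℕ) : 2 * triangular n = n * (n + 1) :=
  Nat.mul_div_cancel' (Nat.even_mul_succ_self n).two_dvd

theorem triangular_strictMono : StrictMono triangular :=
  strictMono_nat_of_lt_succ fun n ↦ by
    nlinarith [two_mul_triangular n, two_mul_triangular (n + 1)]

section Shanks

variable {R : Type*} [CommRing R] (q : R)

/-- The `s`-th summand of Shanks' finite form of Gauss' identity,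
`q ^ (s (2n + 1)) ∏_{s < k ≤ n} (1 - q ^ (2k)) ∏_{k ≤ s} (1 - q ^ (2k - 1))`, that is, Shanks'
summand multiplied by `∏_{k ≤ n} (1 - q ^ (2k))` to clear denominators. -/
def shanksTerm (n s : ℕ) : R :=
  (∏ k ∈ Ico s n, (1 - q ^ (2 * k + 2))) * (∏ k ∈ range s, (1 - q ^ (2 * k + 1))) *
    q ^ (s * (2 * n + 1))

theorem shanksTerm_zero_right (n : ℕ) :
    shanksTerm q n 0 = ∏ k ∈ range n, (1 - q ^ (2 * k + 2)) := by
  simp [shanksTerm]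

theorem shanksTerm_self (n : ℕ) :
    shanksTerm q n n = (∏ k ∈ range n, (1 - q ^ (2 * k + 1))) * q ^ (n * (2 * n + 1)) := by
  simp [shanksTerm]

theorem shanksTerm_succ_left {n s : ℕ} (h : s ≤ n) :
    shanksTerm q (n + 1) s = (1 - q ^ (2 * n + 2)) * q ^ (2 * s) * shanksTerm q n s := by
  rw [shanksTerm, shanksTerm, prod_Ico_succ_top h]
  ring

theorem shanksTerm_succ_right {n s : ℕ} (h : s < n) :
    (1 - q ^ (2 * s + 2)) * shanksTerm q n (s + 1) =
      (1 - q ^ (2 * s + 1)) * q ^ (2 * n + 1) * shanksTerm q n s := by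
  rw [shanksTerm, shanksTerm, prod_eq_prod_Ico_succ_bot h, prod_range_succ]
  ring

theorem sum_range_shanksTerm_succ (n : ℕ) :
    ∑ s ∈ range n, shanksTerm q (n + 1) s =
      (1 - q ^ (2 * n + 1)) * ∑ s ∈ range n, shanksTerm q n s +
        (1 - q ^ (2 * n)) * shanksTerm q n n := by
  have telescope : ∑ s ∈ range n,
      (shanksTerm q (n + 1) s - (1 - q ^ (2 * n + 1)) * shanksTerm q n s) =
        ∑ s ∈ range n, ((1 - q ^ (2 * (s + 1))) * shanksTerm q n (s + 1) -
          (1 - q ^ (2 * s)) * shanksTerm q n s) := by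
    refine sum_congr rfl fun s hs ↦ ?_
    have hsn := mem_range.mp hs
    rw [shanksTerm_succ_left q hsn.le, mul_add_one, shanksTerm_succ_right q hsn]
    ring
  rw [sum_range_sub (fun s ↦ (1 - q ^ (2 * s)) * shanksTerm q n s), sum_sub_distrib,
    ← mul_sum] at telescope
  linear_combination telescope

theorem sum_shanksTerm (n : ℕ) :
    ∑ s ∈ range (n + 1), shanksTerm q n s =
      (∏ k ∈ range n, (1 - q ^ (2 * k + 1))) * ∑ i ∈ range (2 * n + 1), q ^ triangular i := by
  induction n with
  | zero => simp [shanksTerm, triangular]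
  | succ n ih =>
    have h₁ : triangular (2 * n + 1) = (n + 1) * (2 * n + 1) := by
      linarith [two_mul_triangular (2 * n + 1)]
    have h₂ : triangular (2 * n + 2) = (n + 1) * (2 * n + 3) := by
      linarith [two_mul_triangular (2 * n + 2)]
    have hself := shanksTerm_self q (n + 1)
    rw [prod_range_succ] at hself ⊢
    rw [sum_range_succ, shanksTerm_self] at ih
    rw [sum_range_succ, sum_range_succ, sum_range_shanksTerm_succ, shanksTerm_succ_left q le_rfl,
      hself, shanksTerm_self, mul_add_one 2 n, sum_range_succ _ (2 * n + 2),
      sum_range_succ _ (2 * n + 1), h₁, h₂]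
    linear_combination (1 - q ^ (2 * n + 1)) * ih

theorem pow_dvd_prod_even_sub_prod_odd_mul_sum (n : ℕ) :
    q ^ (2 * n + 1) ∣ ∏ k ∈ range n, (1 - q ^ (2 * k + 2)) -
      (∏ k ∈ range n, (1 - q ^ (2 * k + 1))) * ∑ i ∈ range (2 * n + 1), q ^ triangular i := by
  rw [← sum_shanksTerm, sum_range_succ', shanksTerm_zero_right, sub_add_cancel_right, dvd_neg]
  exact dvd_sum fun s _ ↦ Dvd.dvd.mul_left (pow_dvd_pow q (Nat.le_mul_of_pos_left _ s.succ_pos)) _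

theorem prod_range_two_mul_one_sub_pow (n : ℕ) :
    ∏ k ∈ range (2 * n), (1 - q ^ (k + 1)) =
      (∏ k ∈ range n, (1 - q ^ (2 * k + 1))) * ∏ k ∈ range n, (1 - q ^ (2 * k + 2)) := by
  induction n with
  | zero => simp
  | succ n ih =>
    rw [mul_add_one, prod_range_succ, prod_range_succ, ih, prod_range_succ, prod_range_succ]
    ring

theorem pow_dvd_prod_even_sq_sub_prod_mul_sum (n : ℕ) :
    q ^ (2 * n + 1) ∣ (∏ k ∈ range n, (1 - q ^ (2 * k + 2))) ^ 2 -
      (∏ k ∈ range (2 * n), (1 - q ^ (k + 1))) * ∑ i ∈ range (2 * n + 1), q ^ triangular i := by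
  convert (pow_dvd_prod_even_sub_prod_odd_mul_sum q n).mul_left
    (∏ k ∈ range n, (1 - q ^ (2 * k + 2))) using 1
  rw [prod_range_two_mul_one_sub_pow]
  ring

end Shanks

open PowerSeries PowerSeries.WithPiTopology Filter Topology

section Topology

variable {R : Type*} [CommRing R] [TopologicalSpace R]

theorem tendsto_zero_of_X_pow_dvd {f : ℕ → R⟦X⟧} (h : ∀ n, X ^ n ∣ f n) :
    Tendsto f atTop (𝓝 0) := by
  rw [tendsto_iff_coeff_tendsto]
  refine fun d ↦ tendsto_atTop_of_eventually_const (i₀ := d + 1) fun n hn ↦ ?_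
  rw [map_zero]
  exact X_pow_dvd_iff.mp (h n) d hn

theorem continuous_expand {c : ℕ} (hc : c ≠ 0) : Continuous (expand (R := R) c hc) := by
  refine continuous_iff_continuousAt.mpr fun f ↦ (tendsto_iff_coeff_tendsto R _ _ _).mpr fun d ↦ ?_
  simp only [coeff_expand]
  split_ifs
  · exact (continuous_coeff R _).tendsto f
  · exact tendsto_const_nhds

theorem hasProd_expand_pentagonalSeries {c : ℕ} (hc : c ≠ 0) :
    HasProd (fun n ↦ 1 - ((X : R⟦X⟧) ^ (n + 1)) ^ c) (expand c hc (pentagonalSeries R)) := by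
  simpa [Function.comp_def, ← pow_mul, mul_comm] using
    (hasProd_one_sub_X_pow R).map (expand c hc) (continuous_expand hc)

instance [DiscreteTopology R] : NonarchimedeanRing R⟦X⟧ where
  is_nonarchimedean _ hU := by
    have : IsLinearTopology R⟦X⟧ R⟦X⟧ :=
      inferInstanceAs (IsLinearTopology (MvPowerSeries Unit R) (MvPowerSeries Unit R))
    obtain ⟨N, hN, hNU⟩ := (IsLinearTopology.hasBasis_open_submodule R⟦X⟧).mem_iff.mp hU
    exact ⟨⟨N.toAddSubgroup, hN⟩, hNU⟩

end Topology

section IndicatorSeries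

/-- The power series `∑_{n ∈ S} X ^ n`, whose coefficients are the indicator function of `S`. -/
noncomputable def indicatorSeries (R : Type*) [Semiring R] (S : Set ℕ) : R⟦X⟧ :=
  PowerSeries.mk (S.indicator 1)

variable (R : Type*) [CommRing R]

theorem map_indicatorSeries {R' : Type*} [CommRing R'] (f : R →+* R') (S : Set ℕ) :
    map f (indicatorSeries R S) = indicatorSeries R' S := by
  classical
  ext n
  simp [indicatorSeries, Set.indicator_apply, apply_ite f]

theorem hasSum_indicatorSeries_range [TopologicalSpace R] {ι : Type*} {e : ι → ℕ}
    (he : e.Injective) :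
    HasSum (fun i ↦ monomial (e i) (1 : R)) (indicatorSeries R (Set.range e)) := by
  have h := (he.hasSum_iff fun n hn ↦ by simp [indicatorSeries, hn]).mpr
    (hasSum_of_monomials_self (indicatorSeries R (Set.range e)))
  simpa [Function.comp_def, indicatorSeries] using h

theorem pentagonalSeries_eq_indicatorSeries [CharP R 2] :
    pentagonalSeries R = indicatorSeries R (Set.range pentagonal) := by
  ext n
  by_cases hn : n ∈ Set.range pentagonal
  · obtain ⟨k, rfl⟩ := hn
    rcases Int.units_eq_one_or k.negOnePow with hk | hk <;>
      simp [indicatorSeries, hk, CharTwo.neg_eq]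
  · simp [coeff_pentagonalSeries_eq_zero R hn, indicatorSeries, hn]

/-- **Gauss' triangular number identity**. -/
theorem pentagonalSeries_mul_indicatorSeries_triangular :
    pentagonalSeries R * indicatorSeries R (Set.range triangular) =
      expand 2 two_ne_zero (pentagonalSeries R) ^ 2 := by
  let : TopologicalSpace R := ⊥
  have : DiscreteTopology R := ⟨rfl⟩
  have hprod := (hasProd_one_sub_X_pow R).tendsto_prod_nat.comp
    (tendsto_id.const_mul_atTop' two_pos)
  have heven := (hasProd_expand_pentagonalSeries (R := R) two_ne_zero).tendsto_prod_nat
  have hsum := (hasSum_indicatorSeries_range R triangular_strictMono.injective).tendsto_sum_nat.comp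
    ((tendsto_add_atTop_nat 1).comp (tendsto_id.const_mul_atTop' two_pos))
  have hlim := (heven.pow 2).sub (hprod.mul hsum)
  refine (sub_eq_zero.mp (tendsto_nhds_unique hlim (tendsto_zero_of_X_pow_dvd fun n ↦ ?_))).symm
  refine (pow_dvd_pow X (by omega : n ≤ 2 * n + 1)).trans ?_
  simpa [← pow_mul, ← X_pow_eq, add_mul, mul_comm] using
    pow_dvd_prod_even_sq_sub_prod_mul_sum (X : R⟦X⟧) n

end IndicatorSeries

theorem expand_zmod (ℓ : ℕ) [hℓ : Fact ℓ.Prime] (f : (ZMod ℓ)⟦X⟧) :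
    expand ℓ hℓ.out.ne_zero f = f ^ ℓ := by
  have h := MvPowerSeries.map_frobenius_expand ℓ hℓ.out.ne_zero (f := f)
  rwa [ZMod.frobenius_zmod, MvPowerSeries.map_id] at h

theorem expand_four_pentagonalSeries :
    expand 4 four_ne_zero (pentagonalSeries (ZMod 2)) =
      pentagonalSeries (ZMod 2) * indicatorSeries (ZMod 2) (Set.range triangular) := by
  rw [pentagonalSeries_mul_indicatorSeries_triangular, ← expand_zmod, ← expand_mul]

section GeneratingFunctions

variable (R : Type*) [CommRing R]

/-- The generating function of the partition numbers. -/
noncomputable def partitionSeries : R⟦X⟧ :=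
  PowerSeries.mk fun n ↦ (Nat.card n.Partition : R)

theorem partitionSeries_mul_pentagonalSeries : partitionSeries R * pentagonalSeries R = 1 := by
  let : TopologicalSpace R := ⊥
  have : DiscreteTopology R := ⟨rfl⟩
  have hgeom (i : ℕ) : (∑' j : ℕ, (X : R⟦X⟧) ^ ((i + 1) * j)) * (1 - X ^ (i + 1)) = 1 := by
    simp only [pow_mul]
    exact tsum_pow_mul_one_sub_of_constantCoeff_eq_zero (by simp)
  have h := (Nat.Partition.hasProd_powerSeriesMk_card_restricted R fun _ ↦ True).mul
    (hasProd_one_sub_X_pow R)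
  simp only [if_true, hgeom] at h
  simpa [partitionSeries, Nat.Partition.restricted, Nat.card_eq_fintype_card] using
    h.unique hasProd_one

theorem isUnit_pentagonalSeries : IsUnit (pentagonalSeries R) :=
  .of_mul_eq_one_right _ (partitionSeries_mul_pentagonalSeries R)

theorem hasProd_card_partition_count_mem [TopologicalSpace R] [IsTopologicalRing R] [T2Space R]
    {S : Finset ℕ} (hS : 0 ∈ S) :
    HasProd (fun i ↦ ∑ k ∈ S, ((X : R⟦X⟧) ^ (i + 1)) ^ k)
      (PowerSeries.mk fun n ↦
        (Nat.card {π : n.Partition // ∀ i ∈ π.parts, π.parts.count i ∈ S} : R)) := by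
  classical
  convert! Nat.Partition.hasProd_genFun fun _ k ↦ if k ∈ S then (1 : R) else 0 using 1
  · ext1 i
    have h : HasSum (fun k ↦ (if k ∈ S then (1 : R) else 0) • (X : R⟦X⟧) ^ ((i + 1) * k))
        (∑ k ∈ S, (if k ∈ S then (1 : R) else 0) • (X : R⟦X⟧) ^ ((i + 1) * k)) :=
      hasSum_sum_of_ne_finset_zero fun k hk ↦ by simp [hk]
    rw [((hasSum_nat_add_iff' 1).mpr h).tsum_eq]
    simp +contextual [hS, pow_mul]
  · ext n
    rw [coeff_mk, Nat.Partition.coeff_genFun, Nat.card_eq_fintype_card, Fintype.card_subtype]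
    simp_rw [Finsupp.prod, prod_boole]
    simp

/-- The multiplicities allowed in the partitions counted by `b p a r m v`, where `c = p r + a`. -/
def multiplicities (p c v m : ℕ) : Finset ℕ :=
  (range v ×ˢ range m).image fun x ↦ x.1 * c + p * x.2

variable {p c v m : ℕ}

theorem mem_multiplicities_iff (hp : p ≠ 0) (hm : m ≠ 0) {k : ℕ} :
    k ∈ multiplicities p c v m ↔
      ∃ j < v, k ≡ j * c [MOD p] ∧ j * c ≤ k ∧ k ≤ j * c + p * (m - 1) := by
  simp only [multiplicities, mem_image, mem_product, mem_range, Prod.exists]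
  constructor
  · rintro ⟨j, l, ⟨hj, hl⟩, rfl⟩
    exact ⟨j, hj, by simp [Nat.ModEq], by omega, by gcongr; omega⟩
  · rintro ⟨j, hj, hmod, hle, hge⟩
    obtain ⟨l, hl⟩ := (Nat.modEq_iff_dvd' hle).mp hmod.symm
    have : l ≤ m - 1 := Nat.le_of_mul_le_mul_left (by omega) (Nat.pos_of_ne_zero hp)
    exact ⟨j, l, ⟨hj, by omega⟩, by omega⟩

theorem injOn_mul_add_mul (h : v ≤ p / p.gcd c) :
    Set.InjOn (fun x : ℕ × ℕ ↦ x.1 * c + p * x.2) (Set.Iio v ×ˢ Set.univ) := by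
  rintro ⟨j, l⟩ ⟨hj : j < v, -⟩ ⟨j', l'⟩ ⟨hj' : j' < v, -⟩ (heq : j * c + p * l = j' * c + p * l')
  have hp : 0 < p := Nat.pos_of_div_pos (by omega : 0 < p / p.gcd c)
  have hmod : j * c ≡ j' * c [MOD p] := by
    simpa [Nat.ModEq] using congrArg (· % p) heq
  obtain rfl := (hmod.cancel_right_div_gcd hp).eq_of_lt_of_lt (by omega) (by omega)
  rw [Nat.eq_of_mul_eq_mul_left hp (Nat.add_left_cancel heq)]

variable {R} in
theorem sum_multiplicities_pow_mul (h : v ≤ p / p.gcd c) (q : R) :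
    (∑ k ∈ multiplicities p c v m, q ^ k) * ((1 - q ^ c) * (1 - q ^ p)) =
      (1 - q ^ (c * v)) * (1 - q ^ (p * m)) := by
  have hfactor : ∑ k ∈ multiplicities p c v m, q ^ k =
      (∑ j ∈ range v, (q ^ c) ^ j) * ∑ l ∈ range m, (q ^ p) ^ l := by
    rw [multiplicities, sum_image ((injOn_mul_add_mul h).mono fun x hx ↦ by simp_all), sum_mul_sum,
      sum_product]
    simp only [pow_add, mul_comm _ c, pow_mul]
  rw [hfactor, mul_mul_mul_comm, geom_sum_mul_neg, geom_sum_mul_neg, ← pow_mul, ← pow_mul]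

theorem b_eq_card_count_mem (hp : p ≠ 0) (hm : m ≠ 0) (a r n : ℕ) :
    b p a r m v n = Nat.card {π : n.Partition //
      ∀ i ∈ π.parts, π.parts.count i ∈ multiplicities p (p * r + a) v m} := by
  have hmod (j : ℕ) : j * (p * r + a) ≡ j * a [MOD p] := by
    simp [Nat.ModEq, Nat.mul_mod]
  have hiff (k j : ℕ) : k ≡ j * (p * r + a) [MOD p] ↔ k ≡ j * a [MOD p] :=
    ⟨fun h ↦ h.trans (hmod j), fun h ↦ h.trans (hmod j).symm⟩
  simp only [b, mem_multiplicities_iff hp hm, hiff]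

/-- The generating function `∑ b(n) q ^ n` of the partitions counted by `b p a r m v`. -/
noncomputable def bSeries (p a r m v : ℕ) : R⟦X⟧ :=
  PowerSeries.mk fun n ↦ (b p a r m v n : R)

theorem bSeries_mul {a r : ℕ} (h : v ≤ p / p.gcd a) (hp : p ≠ 0) (hc : p * r + a ≠ 0)
    (hv : v ≠ 0) (hm : m ≠ 0) :
    bSeries R p a r m v *
        (expand (p * r + a) hc (pentagonalSeries R) * expand p hp (pentagonalSeries R)) =
      expand ((p * r + a) * v) (mul_ne_zero hc hv) (pentagonalSeries R) *
        expand (p * m) (mul_ne_zero hp hm) (pentagonalSeries R) := by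
  let : TopologicalSpace R := ⊥
  have : DiscreteTopology R := ⟨rfl⟩
  have hzero : 0 ∈ multiplicities p (p * r + a) v m :=
    (mem_multiplicities_iff hp hm).mpr ⟨0, by omega, by simp [Nat.ModEq], by simp, by simp⟩
  have hgcd : v ≤ p / p.gcd (p * r + a) := by simpa using h
  have hb := hasProd_card_partition_count_mem R hzero
  simp only [← b_eq_card_count_mem hp hm] at hb
  have hprod := hb.mul
    ((hasProd_expand_pentagonalSeries hc).mul (hasProd_expand_pentagonalSeries hp))
  simp only [sum_multiplicities_pow_mul hgcd] at hprod
  exact hprod.unique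
    ((hasProd_expand_pentagonalSeries _).mul (hasProd_expand_pentagonalSeries _))

end GeneratingFunctions

/-- The generating function `ψ(q ^ c) Π(q ^ (p m)) / P(q ^ p)` of the sums over triples, where
`Π = ∑ q ^ (j (3 j + 1) / 2)` over all integers `j` is the expansion of `P` without its signs. -/
noncomputable def tripleSeries (R : Type*) [CommRing R] {p c m : ℕ} (hp : p ≠ 0) (hc : c ≠ 0)
    (hm : m ≠ 0) : R⟦X⟧ :=
  expand c hc (indicatorSeries R (Set.range triangular)) *
    (expand (p * m) (mul_ne_zero hp hm) (indicatorSeries R (Set.range pentagonal)) *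
      expand p hp (partitionSeries R))

theorem map_tripleSeries {R R' : Type*} [CommRing R] [CommRing R'] (f : R →+* R') {p c m : ℕ}
    (hp : p ≠ 0) (hc : c ≠ 0) (hm : m ≠ 0) :
    map f (tripleSeries R hp hc hm) = tripleSeries R' hp hc hm := by
  have hpart : map f (partitionSeries R) = partitionSeries R' := by
    ext n
    simp [partitionSeries]
  simp only [tripleSeries, map_mul, map_expand, map_indicatorSeries, hpart]

theorem hasSum_tripleSeries (R : Type*) [CommRing R] [UniformSpace R] [IsUniformAddGroup R]
    [DiscreteTopology R] {p c m : ℕ} (hp : p ≠ 0) (hc : c ≠ 0) (hm : m ≠ 0) :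
    HasSum (fun x : ℕ × ℤ × ℕ ↦
        monomial (c * triangular x.1 + (p * m * pentagonal (-x.2.1) + p * x.2.2))
          (Nat.card x.2.2.Partition : R))
      (tripleSeries R hp hc hm) := by
  have hψ := (hasSum_indicatorSeries_range R triangular_strictMono.injective).map
    (expand c hc) (continuous_expand hc)
  have hpent := ((Equiv.neg ℤ).hasSum_iff.mpr
    (hasSum_indicatorSeries_range R pentagonal_injective)).map
    (expand (p * m) (mul_ne_zero hp hm)) (continuous_expand _)
  have hpart := (hasSum_of_monomials_self (partitionSeries R)).map
    (expand p hp) (continuous_expand hp)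
  simpa [tripleSeries, partitionSeries, Function.comp_def, monomial_mul_monomial] using
    hψ.mul_of_nonarchimedean (hpent.mul_of_nonarchimedean hpart)

theorem bSeries_four_eq_tripleSeries {p a r m : ℕ} (h : 4 ≤ p / p.gcd a) (hp : p ≠ 0)
    (hc : p * r + a ≠ 0) (hm : m ≠ 0) :
    bSeries (ZMod 2) p a r m 4 = tripleSeries (ZMod 2) hp hc hm := by
  set P := pentagonalSeries (ZMod 2)
  set ψ := indicatorSeries (ZMod 2) (Set.range triangular)
  have hb := bSeries_mul (ZMod 2) (r := r) h hp hc four_ne_zero hm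
  have hψ : expand ((p * r + a) * 4) (mul_ne_zero hc four_ne_zero) P =
      expand (p * r + a) hc P * expand (p * r + a) hc ψ := by
    rw [expand_mul _ hc 4 four_ne_zero, expand_four_pentagonalSeries, map_mul]
  have hpart : expand p hp (partitionSeries (ZMod 2)) * expand p hp P = 1 := by
    rw [← map_mul, partitionSeries_mul_pentagonalSeries, map_one]
  have hunit : IsUnit (expand (p * r + a) hc P * expand p hp P) :=
    ((isUnit_pentagonalSeries _).map _).mul ((isUnit_pentagonalSeries _).map _)
  refine hunit.mul_right_cancel ?_
  rw [hb, hψ, tripleSeries, ← pentagonalSeries_eq_indicatorSeries]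
  linear_combination
    -(expand (p * r + a) hc P * expand (p * r + a) hc ψ * expand (p * m) (mul_ne_zero hp hm) P) *
      hpart

/-- `pentagonal j` is `j (3 j - 1) / 2`, hence the sign of `j` on the right. -/
theorem eq_exponent_iff (p a r m n s : ℕ) (j : ℤ) (k : ℕ) :
    (n : ℤ) = ((p : ℤ) * r + a) * s * (s + 1) / 2 + (p : ℤ) * m * j * (3 * j + 1) / 2
        + (p : ℤ) * k ↔
      n = (p * r + a) * triangular s + (p * m * pentagonal (-j) + p * k) := by
  have htri : ((p : ℤ) * r + a) * s * (s + 1) / 2 = (p * r + a) * triangular s := by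
    have h : 2 * (triangular s : ℤ) = s * (s + 1) := mod_cast two_mul_triangular s
    apply Int.ediv_eq_of_eq_mul_left two_ne_zero
    linear_combination -((p : ℤ) * r + a) * h
  have hpent : (p : ℤ) * m * j * (3 * j + 1) / 2 = p * m * pentagonal (-j) := by
    apply Int.ediv_eq_of_eq_mul_left two_ne_zero
    linear_combination -((p : ℤ) * m) * two_mul_natCast_pentagonal_neg j
  rw [htri, hpent, add_assoc]
  norm_cast

end PartitionParity

open PartitionParity PowerSeries PowerSeries.WithPiTopology in
theorem b_four_mod_two_general (p a r m : ℕ) (h : 4 ≤ p / p.gcd a) (hm : 1 ≤ m) (n : ℕ) :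
    (b p a r m 4 n : ℤ) ≡
      (∑' x : ℕ × ℤ × ℕ,
        if (n : ℤ) = ((p : ℤ) * r + a) * x.1 * (x.1 + 1) / 2
            + (p : ℤ) * m * x.2.1 * (3 * x.2.1 + 1) / 2 + (p : ℤ) * x.2.2
        then (Nat.card (Nat.Partition x.2.2) : ℤ) else 0) [ZMOD 2] := by
  have hgcd : 0 < p / p.gcd a := by omega
  have hp : p ≠ 0 := (Nat.pos_of_div_pos hgcd).ne'
  have hc : p * r + a ≠ 0 := by
    intro hc
    obtain rfl : a = 0 := by omega
    rw [Nat.gcd_zero_right, Nat.div_self (Nat.pos_of_ne_zero hp)] at h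
    omega
  have hm₀ : m ≠ 0 := by omega
  have hsum := (hasSum_iff_hasSum_coeff ℤ).mp (hasSum_tripleSeries ℤ hp hc hm₀) n
  simp only [coeff_monomial, ← eq_exponent_iff] at hsum
  refine (ZMod.intCast_eq_intCast_iff _ _ 2).mp ?_
  calc ((b p a r m 4 n : ℤ) : ZMod 2) = coeff n (bSeries (ZMod 2) p a r m 4) := by simp [bSeries]
    _ = coeff n (map (Int.castRingHom (ZMod 2)) (tripleSeries ℤ hp hc hm₀)) := by
      rw [bSeries_four_eq_tripleSeries h hp hc hm₀, map_tripleSeries]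
    _ = _ := by rw [coeff_map, ← hsum.tsum_eq]; norm_cast

/-- For every `n`, `b_{4,r,a,m}(n) ≡ Σ p(k) (mod 2)`, summed over all triples
`(s, j, k)` with `s ∈ ℤ≥0`, `j ∈ ℤ`, `k ∈ ℤ≥0` and
`n = (pr+a)·s(s+1)/2 + pm·j(3j+1)/2 + pk`, where `p(k)` is the number of
partitions of `k`. Only finitely many terms of the sum are nonzero. -/
theorem b_four_mod_two (p a r m : ℕ) (hp : 4 ≤ p) (ha : 0 < a)
    (hco : Nat.gcd a p = 1) (hm : 1 ≤ m) (n : ℕ) :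
    (b p a r m 4 n : ℤ) ≡
      (∑' x : ℕ × ℤ × ℕ,
        if (n : ℤ) = ((p : ℤ) * r + a) * x.1 * (x.1 + 1) / 2
            + (p : ℤ) * m * x.2.1 * (3 * x.2.1 + 1) / 2 + (p : ℤ) * x.2.2
        then (Nat.card (Nat.Partition x.2.2) : ℤ) else 0) [ZMOD 2] :=
  b_four_mod_two_general p a r m (by rwa [Nat.gcd_comm, hco, Nat.div_one]) hm n
end
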